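/- arXiv:2106.08949 — 2 statements merged into one kernel-verified Lean document; each statement's English description precedes it below -/
import Mathlib

section
/- Let d ≥ 1 be an integer, p ∈ [1,∞), and let I ⊂ (0,∞) be σ-compact. Let (w(λ))_{λ∈I} be a continuous family of bounded positive weight sequences. Assume that for every compact I₀ ⊂ I there exist D₁, D₂, γ > 0 and an integer N ≥ 0 such that for all n ≥ N: (1) the map a ↦ Σ_{i=1}^n log(w_i(a)) is D₁·log(n)-Lipschitz on I₀; and (2) inf_{a∈I₀} w_1(a)⋯w_n(a) ≥ D₂·n^γ. Then the family (B_{w(λ₁)} × ⋯ × B_{w(λ_d)})_{λ∈I^d} admits a common hypercyclic algebra on ℓp(ℕ)^d for the coordinatewise product. -/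
open scoped ENNReal
open Finset

noncomputable section

/-- The space `ℓᵖ(ℕ)` of `p`-summable complex sequences. -/
abbrev lpC (p : ℝ≥0∞) : Type := lp (fun _ : ℕ => ℂ) p

/-- `T` is the product operator `B_{w(lam 0)} × ⋯ × B_{w(lam (d-1))}` of weighted backward
shifts, the weight sequence of the `i`-th factor being `(w (lam i) n)_{n ≥ 1}`. -/
def IsProductShift (p : ℝ≥0∞) [Fact (1 ≤ p)] (d : ℕ) (w : ℝ → ℕ → ℝ)
    (T : (Fin d → lpC p) →L[ℂ] (Fin d → lpC p)) (lam : Fin d → ℝ) : Prop :=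
  ∀ (v : Fin d → lpC p) (i : Fin d) (n : ℕ),
    (T v) i n = (w (lam i) (n + 1) : ℂ) * v i (n + 1)

/-- The family `T lam`, `lam ∈ S`, admits a common hypercyclic algebra for the coordinatewise
product: there is a non-unital subalgebra `A ≠ {0}` of `(ℓᵖ(ℕ))^d` (closed under addition,
scalar multiplication and the componentwise coordinatewise product) every nonzero element of
which is a common hypercyclic vector for the family. -/
def CommonHypercyclicAlgebraCW (p : ℝ≥0∞) [Fact (1 ≤ p)] (d : ℕ) (S : Set (Fin d → ℝ))
    (T : (Fin d → ℝ) → ((Fin d → lpC p) →L[ℂ] (Fin d → lpC p))) : Prop :=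
  ∃ A : Set (Fin d → lpC p),
    (0 : Fin d → lpC p) ∈ A ∧
    (∀ x ∈ A, ∀ y ∈ A, x + y ∈ A) ∧
    (∀ (c : ℂ), ∀ x ∈ A, c • x ∈ A) ∧
    (∀ x ∈ A, ∀ y ∈ A, ∃ z ∈ A, ∀ (i : Fin d) (n : ℕ), z i n = x i n * y i n) ∧
    (∃ x ∈ A, x ≠ 0) ∧
    (∀ x ∈ A, x ≠ 0 → ∀ lam ∈ S, Dense (Set.range fun n : ℕ => ((T lam) ^ (n + 1)) x))


lemma cover_aux {d : ℕ} (K : Set (Fin d → ℝ)) (R : ℝ) (hK : K ⊆ Metric.ball 0 R)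
    (ρ : ℕ → ℝ) (hρ : ∀ k, 0 < ρ k) (hanti : Antitone ρ) (hdiv : ¬ Summable (fun k => ρ k ^ d)) :
    ∃ (M : ℕ) (c : ℕ → Fin d → ℝ), (∀ k < M, c k ∈ K) ∧
      ∀ x ∈ K, ∃ k < M, dist x (c k) < ρ k := by
  by_contra hcon
  push Not at hcon
  have key : ∀ M : ℕ, ∃ c : ℕ → Fin d → ℝ, (∀ k < M, c k ∈ K) ∧
      ∀ k < M, ∀ l < k, ρ l ≤ dist (c k) (c l) := by
    intro M
    induction M with
    | zero => exact ⟨fun _ => 0, by simp, by simp⟩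
    | succ M ih =>
      obtain ⟨c, h1, h2⟩ := ih
      obtain ⟨x, hx, hx2⟩ := hcon M c h1
      refine ⟨Function.update c M x, ?_, ?_⟩
      · intro k hk
        rcases Nat.lt_succ_iff_lt_or_eq.mp hk with h | h
        · rw [Function.update_of_ne h.ne]; exact h1 k h
        · subst h; simpa using hx
      · intro k hk l hl
        rcases Nat.lt_succ_iff_lt_or_eq.mp hk with h | h
        · rw [Function.update_of_ne h.ne, Function.update_of_ne (by omega)]; exact h2 k h l hl
        · subst h
          rw [Function.update_self, Function.update_of_ne hl.ne]; exact hx2 l hl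
  -- volumes
  apply hdiv
  refine summable_of_sum_range_le (c := (2 * (R + ρ 0)) ^ d) (fun k => (pow_pos (hρ k) d).le) ?_
  intro M
  obtain ⟨c, h1, h2⟩ := key M
  have hdisj : (↑(range M) : Set ℕ).PairwiseDisjoint (fun k => Metric.ball (c k) (ρ k / 2)) := by
    have hlt : ∀ k < M, ∀ l < k, Disjoint (Metric.ball (c k) (ρ k / 2)) (Metric.ball (c l) (ρ l / 2)) := by
      intro k hk l hl
      apply Metric.ball_disjoint_ball
      have := h2 k hk l hl
      have := hanti hl.le
      linarith
    intro k hk l hl hkl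
    simp only [coe_range, Set.mem_Iio] at hk hl
    rcases lt_or_gt_of_ne hkl with h | h
    · exact (hlt l hl k h).symm
    · exact hlt k hk l h
  by_cases hM : M = 0
  · subst hM
    simp only [range_zero, sum_empty]
    rcases d.eq_zero_or_pos with h | h
    · subst h; simp
    · by_cases hR : 0 ≤ R + ρ 0
      · positivity
      · exfalso
        have hKe : K = ∅ := by
          rw [← Set.subset_empty_iff]
          intro x hx
          have := hK hx
          have h3 := hρ 0
          rw [Metric.ball_eq_empty.mpr (by linarith)] at this
          exact this
        obtain ⟨x, hx, _⟩ := hcon 0 (fun _ => 0) (by simp)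
        simp [hKe] at hx
  have hRpos : 0 < R := by
    have := hK (h1 0 (by omega))
    exact Metric.pos_of_mem_ball this
  have hvol := MeasureTheory.measure_biUnion_finset (μ := (MeasureTheory.volume : MeasureTheory.Measure (Fin d → ℝ)))
    hdisj (fun k _ => measurableSet_ball)
  have hsub : (⋃ k ∈ range M, Metric.ball (c k) (ρ k / 2)) ⊆ Metric.ball 0 (R + ρ 0) := by
    intro x hx
    simp only [Set.mem_iUnion, mem_range] at hx
    obtain ⟨k, hk, hx⟩ := hx
    have a1 := hK (h1 k hk)
    rw [Metric.mem_ball] at *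
    have a2 := hanti (Nat.zero_le k)
    have a3 := hρ k
    have := dist_triangle x (c k) 0
    linarith
  have hle := MeasureTheory.measure_mono (μ := MeasureTheory.volume) hsub
  rw [hvol, Real.volume_pi_ball _ (by have := hρ 0; linarith)] at hle
  have e : ∀ k ∈ range M, MeasureTheory.volume (Metric.ball (c k) (ρ k / 2)) = ENNReal.ofReal (ρ k ^ d) := by
    intro k _
    rw [Real.volume_pi_ball _ (by have := hρ k; linarith), Fintype.card_fin]
    congr 2
    ring
  rw [sum_congr rfl e, ← ENNReal.ofReal_sum_of_nonneg (fun k _ => (pow_pos (hρ k) d).le)] at hle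
  have h5 : (0:ℝ) ≤ (2 * (R + ρ 0)) ^ d := by have := hρ 0; positivity
  simpa [ENNReal.ofReal_le_ofReal_iff h5] using hle

lemma not_summable_aux (d : ℕ) (hd : 1 ≤ d) (δ : ℝ) (hδ : 0 < δ) (m s : ℕ) (hm : 2 ≤ m) (hs : 1 ≤ s) :
    ¬ Summable (fun k : ℕ => (δ / Real.log (((m * (k+1)) ^ s : ℕ) : ℝ)) ^ d) := by
  intro h
  have hd' : (0:ℝ) < d := by exact_mod_cast hd
  have hs' : (0:ℝ) < s := by exact_mod_cast hs
  have hm' : (0:ℝ) < m := by exact_mod_cast (by omega : 0 < m)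
  set c : ℝ := (δ / (s * d)) ^ d / m with hc
  have hcpos : 0 < c := by positivity
  have h2 : Summable (fun k : ℕ => c * (1 / ((k:ℝ) + 1))) := by
    refine Summable.of_nonneg_of_le (fun k => by positivity) ?_ h
    intro k
    have hx1 : (1:ℝ) < m * (k+1) := by
      have : (2:ℝ) ≤ m := by exact_mod_cast hm
      nlinarith [(Nat.cast_nonneg k : (0:ℝ) ≤ k)]
    have hx : (0:ℝ) < m * (k+1) := by positivity
    have hl := Real.log_le_rpow_div hx.le (ε := 1 / d) (by positivity)
    have hlp : 0 < Real.log (m * (k+1)) := Real.log_pos hx1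
    push_cast
    rw [Real.log_pow]
    have e1 : δ / (s * (d * ((m:ℝ) * (k+1)) ^ (1 / (d:ℝ)))) ≤ δ / (s * Real.log (m * (k+1))) := by
      apply div_le_div_of_nonneg_left hδ.le (by positivity)
      apply mul_le_mul_of_nonneg_left _ hs'.le
      calc _ ≤ _ := hl
        _ = _ := by field_simp
    refine le_trans (le_of_eq ?_) (pow_le_pow_left₀ (by positivity) e1 d)
    rw [← mul_assoc, ← div_div, div_pow _ _ d, ← Real.rpow_natCast (_ ^ (1 / (d:ℝ))) d, ← Real.rpow_mul hx.le,
      one_div_mul_cancel hd'.ne', Real.rpow_one, hc]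
    field_simp
  have h3 : Summable (fun k : ℕ => (1 / ((k:ℝ) + 1))) := (summable_mul_left_iff hcpos.ne').mp h2
  have := (summable_nat_add_iff (f := fun k : ℕ => 1 / (k:ℝ)) 1).mp (by simpa using h3)
  exact Real.not_summable_one_div_natCast this

/-- The product of the first `n` weights. -/
noncomputable def Mw (w : ℝ → ℕ → ℝ) (a : ℝ) (n : ℕ) : ℝ := ∏ i ∈ Finset.Icc 1 n, w a i

/-- Product of `n` weights starting after index `j`. -/
noncomputable def Ww (w : ℝ → ℕ → ℝ) (a : ℝ) (n j : ℕ) : ℝ := ∏ t ∈ Finset.range n, w a (j + t + 1)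

section facts
variable {I : Set ℝ} {w : ℝ → ℕ → ℝ}

lemma Mw_succ (a : ℝ) (n : ℕ) : Mw w a (n+1) = Mw w a n * w a (n+1) := by
  unfold Mw
  rw [Finset.prod_Icc_succ_top (by omega)]

lemma Mw_pos (hwpos : ∀ a ∈ I, ∀ n : ℕ, 1 ≤ n → 0 < w a n) {a : ℝ} (ha : a ∈ I) (n : ℕ) :
    0 < Mw w a n := Finset.prod_pos fun i hi => hwpos a ha i (Finset.mem_Icc.mp hi).1

lemma Ww_pos (hwpos : ∀ a ∈ I, ∀ n : ℕ, 1 ≤ n → 0 < w a n) {a : ℝ} (ha : a ∈ I) (n j : ℕ) :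
    0 < Ww w a n j := Finset.prod_pos fun i _ => hwpos a ha _ (by omega)

lemma Mw_mul_Ww (a : ℝ) (n j : ℕ) : Mw w a j * Ww w a n j = Mw w a (j + n) := by
  induction n with
  | zero => simp [Ww]
  | succ n ih =>
    rw [← add_assoc, Mw_succ, ← ih, Ww, Finset.prod_range_succ, ← Ww, mul_assoc]

lemma log_Mw (hwpos : ∀ a ∈ I, ∀ n : ℕ, 1 ≤ n → 0 < w a n) {a : ℝ} (ha : a ∈ I) (n : ℕ) :
    Real.log (Mw w a n) = ∑ i ∈ Finset.Icc 1 n, Real.log (w a i) :=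
  Real.log_prod fun i hi => (hwpos a ha i (Finset.mem_Icc.mp hi).1).ne'

lemma Mw_cont (hwcont : ∀ n : ℕ, ContinuousOn (fun a => w a n) I) (n : ℕ) :
    ContinuousOn (fun a => Mw w a n) I :=
  continuousOn_finsetProd _ fun i _ => hwcont i

lemma Mw_bdd (hwcont : ∀ n : ℕ, ContinuousOn (fun a => w a n) I) (C : Set ℝ) (hC : C ⊆ I)
    (hCc : IsCompact C) (J : ℕ) : ∃ A : ℝ, 0 < A ∧ ∀ j ≤ J, ∀ a ∈ C, Mw w a j ≤ A := by
  have : ∀ j, ∃ A : ℝ, ∀ a ∈ C, Mw w a j ≤ A := by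
    intro j
    obtain ⟨A, hA⟩ := (hCc.image_of_continuousOn ((Mw_cont hwcont j).mono hC)).bddAbove
    exact ⟨A, fun a ha => hA ⟨a, ha, rfl⟩⟩
  choose A hA using this
  refine ⟨1 + ∑ j ∈ range (J+1), |A j|, by positivity, fun j hj a ha => ?_⟩
  have := Finset.single_le_sum (f := fun j => |A j|) (fun _ _ => abs_nonneg _) (mem_range.mpr (Nat.lt_succ_of_le hj))
  have h2 := hA j a ha
  have := le_abs_self (A j)
  linarith

lemma log_unif (hwpos : ∀ a ∈ I, ∀ n : ℕ, 1 ≤ n → 0 < w a n)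
    (hwcont : ∀ n : ℕ, ContinuousOn (fun a => w a n) I) (C : Set ℝ) (hC : C ⊆ I)
    (hCc : IsCompact C) (J : ℕ) (δ : ℝ) (hδ : 0 < δ) : ∃ ρ > 0, ∀ j ≤ J, ∀ a ∈ C, ∀ b ∈ C,
      |a - b| < ρ → |Real.log (Mw w a j) - Real.log (Mw w b j)| ≤ δ := by
  have : ∀ j, ∃ ρ > 0, ∀ a ∈ C, ∀ b ∈ C,
      |a - b| < ρ → |Real.log (Mw w a j) - Real.log (Mw w b j)| ≤ δ := by
    intro j
    have hc : ContinuousOn (fun a => Real.log (Mw w a j)) C :=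
      ((Mw_cont hwcont j).mono hC).log fun a ha => (Mw_pos hwpos (hC ha) j).ne'
    have := hCc.uniformContinuousOn_of_continuous hc
    rw [Metric.uniformContinuousOn_iff] at this
    obtain ⟨ρ, hρ, h⟩ := this δ hδ
    exact ⟨ρ, hρ, fun a ha b hb hab => (h a ha b hb hab).le⟩
  choose ρ hρ h using this
  induction J with
  | zero => exact ⟨ρ 0, hρ 0, fun j hj => by rw [Nat.le_zero.mp hj]; exact h 0⟩
  | succ J ih =>
    obtain ⟨ρ', h1, h2⟩ := ih
    refine ⟨min ρ' (ρ (J+1)), lt_min h1 (hρ _), fun j hj a ha b hb hab => ?_⟩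
    rcases Nat.le_succ_iff.mp hj with h' | h'
    · exact h2 j h' a ha b hb (hab.trans_le (min_le_left _ _))
    · subst h'
      exact h _ a ha b hb (hab.trans_le (min_le_right _ _))

lemma w_growth (hwpos : ∀ a ∈ I, ∀ n : ℕ, 1 ≤ n → 0 < w a n)
    (hwbdd : ∀ a ∈ I, ∃ C : ℝ, ∀ n : ℕ, 1 ≤ n → w a n ≤ C)
    (hwcont : ∀ n : ℕ, ContinuousOn (fun a => w a n) I) (Q : Set ℝ) (hQ : Q ⊆ I)
    (hQc : IsCompact Q) (D₁ : ℝ) (hD : 0 < D₁) (N : ℕ)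
    (hlip : ∀ n, N ≤ n → ∀ a ∈ Q, ∀ b ∈ Q,
      |Real.log (Mw w a n) - Real.log (Mw w b n)| ≤ D₁ * Real.log n * |a - b|)
    (β : ℝ) (hβ : 0 < β) :
    ∃ A : ℝ, 1 ≤ A ∧ ∀ a ∈ Q, ∀ n : ℕ, 1 ≤ n → w a n ≤ A * (n:ℝ) ^ β := by
  refine hQc.induction_on (p := fun S => ∃ A : ℝ, 1 ≤ A ∧ ∀ a ∈ S, ∀ n : ℕ, 1 ≤ n → w a n ≤ A * (n:ℝ) ^ β)
    ⟨1, le_rfl, by simp⟩ ?_ ?_ ?_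
  · rintro S S' hS ⟨A, hA, h⟩
    exact ⟨A, hA, fun a ha => h a (hS ha)⟩
  · rintro S S' ⟨A, hA, h⟩ ⟨A', hA', h'⟩
    refine ⟨max A A', le_trans hA (le_max_left _ _), ?_⟩
    rintro a (ha | ha) n hn
    · exact (h a ha n hn).trans (mul_le_mul_of_nonneg_right (le_max_left _ _) (by positivity))
    · exact (h' a ha n hn).trans (mul_le_mul_of_nonneg_right (le_max_right _ _) (by positivity))
  · intro x hx
    obtain ⟨C, hC⟩ := hwbdd x (hQ hx)
    have hC0 : 0 < C := (hwpos x (hQ hx) 1 le_rfl).trans_le (hC 1 le_rfl)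
    set ρ := β / (2 * D₁) with hρ
    have hρ0 : 0 < ρ := by positivity
    refine ⟨{a | a ∈ Q ∧ |a - x| < ρ ∧ ∀ n ∈ Finset.range (N+2), w a n < w x n + 1}, ?_, C + 1, by linarith, ?_⟩
    · have e1 : ∀ᶠ a in nhdsWithin x Q, |a - x| < ρ :=
        nhdsWithin_le_nhds (Metric.ball_mem_nhds x hρ0)
      have e2 : ∀ᶠ a in nhdsWithin x Q, ∀ n ∈ Finset.range (N+2), w a n < w x n + 1 := by
        rw [Filter.eventually_all_finset]
        intro n _
        exact (((hwcont n).mono hQ) x hx).eventually_lt_const (by linarith)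
      filter_upwards [self_mem_nhdsWithin, e1, e2] with a h1 h2 h3
      exact ⟨h1, h2, h3⟩
    · rintro a ⟨ha, hax, hsm⟩ n hn
      have hn1 : (1:ℝ) ≤ n := by exact_mod_cast hn
      have hnb : (1:ℝ) ≤ (n:ℝ) ^ β := Real.one_le_rpow hn1 hβ.le
      by_cases hnN : n < N + 2
      · have h1 := hsm n (Finset.mem_range.mpr hnN)
        have h2 := hC n hn
        nlinarith
      · obtain ⟨k, rfl⟩ : ∃ k, n = k + 1 := ⟨n - 1, by omega⟩
        have hk1 : (1:ℝ) ≤ k := by exact_mod_cast (by omega : 1 ≤ k)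
        have l1 := (abs_le.mp (hlip (k+1) (by omega) a ha x hx)).2
        have l2 := (abs_le.mp (hlip k (by omega) a ha x hx)).1
        have wa := hwpos a (hQ ha) (k+1) hn
        have wx := hwpos x (hQ hx) (k+1) hn
        rw [Mw_succ, Mw_succ, Real.log_mul (Mw_pos hwpos (hQ ha) k).ne' wa.ne',
          Real.log_mul (Mw_pos hwpos (hQ hx) k).ne' wx.ne'] at l1
        have hlog : Real.log k ≤ Real.log ((k+1 : ℕ) : ℝ) :=
          Real.log_le_log (by linarith) (by push_cast; linarith)
        have hlog0 : 0 ≤ Real.log k := Real.log_nonneg hk1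
        have hDρ : D₁ * |a - x| ≤ β / 2 := by
          have : D₁ * ρ = β / 2 := by rw [hρ]; field_simp
          rw [← this]
          exact mul_le_mul_of_nonneg_left hax.le hD.le
        have e1 : D₁ * Real.log k * |a - x| ≤ β / 2 * Real.log ((k+1 : ℕ) : ℝ) := by
          calc D₁ * Real.log k * |a - x| = (D₁ * |a - x|) * Real.log k := by ring
            _ ≤ _ := by gcongr
        have e2 : D₁ * Real.log ((k+1 : ℕ) : ℝ) * |a - x| ≤ β / 2 * Real.log ((k+1 : ℕ) : ℝ) := by
          calc D₁ * Real.log ((k+1 : ℕ) : ℝ) * |a - x| = (D₁ * |a - x|) * Real.log ((k+1 : ℕ) : ℝ) := by ring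
            _ ≤ _ := by gcongr
        have e3 : Real.log (w a (k+1)) ≤ Real.log (w x (k+1) * ((k+1 : ℕ) : ℝ) ^ β) := by
          rw [Real.log_mul wx.ne' (by positivity), Real.log_rpow (by positivity)]
          linarith
        have e4 := (Real.log_le_log_iff wa (by positivity)).mp e3
        have e5 := hC (k+1) hn
        calc _ ≤ _ := e4
          _ ≤ _ := by gcongr; linarith

lemma Ww_growth (hwpos : ∀ a ∈ I, ∀ n : ℕ, 1 ≤ n → 0 < w a n)
    (hwbdd : ∀ a ∈ I, ∃ C : ℝ, ∀ n : ℕ, 1 ≤ n → w a n ≤ C)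
    (hwcont : ∀ n : ℕ, ContinuousOn (fun a => w a n) I) (Q : Set ℝ) (hQ : Q ⊆ I)
    (hQc : IsCompact Q) (D₁ : ℝ) (hD : 0 < D₁) (N : ℕ)
    (hlip : ∀ n, N ≤ n → ∀ a ∈ Q, ∀ b ∈ Q,
      |Real.log (Mw w a n) - Real.log (Mw w b n)| ≤ D₁ * Real.log n * |a - b|)
    (L : ℕ) (β : ℝ) (hβ : 0 < β) :
    ∃ A : ℝ, 1 ≤ A ∧ ∀ n ≤ L, ∀ a ∈ Q, ∀ j : ℕ, Ww w a n j ≤ A * ((j + n + 1 : ℕ):ℝ) ^ β := by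
  obtain ⟨A, hA, h⟩ := w_growth hwpos hwbdd hwcont Q hQ hQc D₁ hD N hlip (β / (L+1)) (by positivity)
  refine ⟨A ^ L, one_le_pow₀ hA, fun n hn a ha j => ?_⟩
  have hx : (1:ℝ) ≤ ((j + n + 1 : ℕ):ℝ) := by push_cast; linarith [(Nat.cast_nonneg j : (0:ℝ) ≤ j), (Nat.cast_nonneg n : (0:ℝ) ≤ n)]
  calc Ww w a n j ≤ ∏ t ∈ Finset.range n, (A * ((j + n + 1 : ℕ):ℝ) ^ (β / (L+1))) := by
        apply Finset.prod_le_prod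
        · intro i _; exact (hwpos a (hQ ha) _ (by omega)).le
        · intro i hi
          have := Finset.mem_range.mp hi
          refine (h a ha (j+i+1) (by omega)).trans ?_
          gcongr
    _ = A ^ n * (((j + n + 1 : ℕ):ℝ) ^ (β / (L+1))) ^ n := by
        rw [Finset.prod_const, Finset.card_range, mul_pow]
    _ ≤ A ^ L * ((j + n + 1 : ℕ):ℝ) ^ β := by
        gcongr
        rw [← Real.rpow_natCast, ← Real.rpow_mul (by positivity)]
        apply Real.rpow_le_rpow_of_exponent_le hx
        rw [div_mul_eq_mul_div, div_le_iff₀ (by positivity)]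
        have : (n:ℝ) ≤ L := by exact_mod_cast hn
        nlinarith
end facts
section est
variable {I : Set ℝ} {w : ℝ → ℕ → ℝ}

lemma W_lower (hwpos : ∀ a ∈ I, ∀ n : ℕ, 1 ≤ n → 0 < w a n) {a : ℝ} (ha : a ∈ I)
    {D₂ γ A : ℝ} (hD₂ : 0 < D₂) (hγ : 0 < γ) (hA : 0 < A) {τ j : ℕ}
    (hM : Mw w a j ≤ A) (hlow : D₂ * ((j + τ : ℕ) : ℝ) ^ γ ≤ Mw w a (j + τ)) :
    D₂ / A * (τ : ℝ) ^ γ ≤ Ww w a τ j := by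
  rw [← Mw_mul_Ww] at hlow
  have hW := Ww_pos hwpos ha τ j
  have h1 : D₂ * (τ : ℝ) ^ γ ≤ D₂ * ((j + τ : ℕ) : ℝ) ^ γ := by
    gcongr; omega
  rw [div_mul_eq_mul_div, div_le_iff₀ hA]
  nlinarith

lemma val_bound {D γ W H : ℝ} (hD : 0 < D) (τ r : ℕ) (hτ : 1 ≤ τ) (hr : 1 ≤ r)
    (hW : D * (τ : ℝ) ^ γ ≤ W) (η : ℂ) (hη : ‖η‖ ≤ H) :
    ‖η * ((W ^ (-(1 / (r:ℝ))) : ℝ) : ℂ)‖ ≤ H * D ^ (-(1 / (r:ℝ))) * (τ:ℝ) ^ (-(γ / r)) := by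
  have hτ' : (0:ℝ) < τ := by exact_mod_cast hτ
  have hr' : (0:ℝ) < r := by exact_mod_cast hr
  have hW0 : 0 < W := lt_of_lt_of_le (by positivity) hW
  rw [norm_mul, Complex.norm_real, Real.norm_of_nonneg (by positivity), mul_assoc]
  have h1 : W ^ (-(1 / (r:ℝ))) ≤ (D * (τ : ℝ) ^ γ) ^ (-(1 / (r:ℝ))) :=
    Real.rpow_le_rpow_of_nonpos (by positivity) hW (by simp)
  rw [Real.mul_rpow hD.le (by positivity), ← Real.rpow_mul hτ'.le] at h1
  have e : γ * -(1 / (r:ℝ)) = -(γ / r) := by ring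
  rw [e] at h1
  exact mul_le_mul hη h1 (by positivity) ((norm_nonneg _).trans hη)

lemma val_pow {W : ℝ} (hW : 0 < W) (r : ℕ) (hr : 1 ≤ r) (η : ℂ) :
    (η * ((W ^ (-(1 / (r:ℝ))) : ℝ) : ℂ)) ^ r = η ^ r * ((W⁻¹ : ℝ) : ℂ) := by
  have hr' : (r:ℝ) ≠ 0 := by positivity
  rw [mul_pow, ← Complex.ofReal_pow, ← Real.rpow_natCast, ← Real.rpow_mul hW.le]
  congr 3
  rw [neg_mul, one_div_mul_cancel hr', Real.rpow_neg_one]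

lemma pow_decay {t s : ℕ} (ht : 1 ≤ t) {x : ℝ} (hx : 2 ≤ s * x) :
    ((t ^ s : ℕ) : ℝ) ^ (-x) ≤ 1 / (t:ℝ) ^ 2 := by
  have ht' : (1:ℝ) ≤ t := by exact_mod_cast ht
  push_cast
  rw [← Real.rpow_natCast, ← Real.rpow_mul (by positivity), one_div, ← Real.rpow_natCast (t:ℝ) 2,
    ← Real.rpow_neg (by positivity)]
  apply Real.rpow_le_rpow_of_exponent_le ht'
  push_cast; linarith

lemma W_ratio (hwpos : ∀ a ∈ I, ∀ n : ℕ, 1 ≤ n → 0 < w a n) {a b : ℝ} (ha : a ∈ I) (hb : b ∈ I)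
    {θ : ℝ} (hθ : θ ≤ 1) {τ j : ℕ}
    (h1 : |Real.log (Mw w a (j+τ)) - Real.log (Mw w b (j+τ))| ≤ θ / 2)
    (h2 : |Real.log (Mw w a j) - Real.log (Mw w b j)| ≤ θ / 2) :
    |Ww w a τ j * (Ww w b τ j)⁻¹ - 1| ≤ 2 * θ := by
  have pa := Ww_pos hwpos ha τ j
  have pb := Ww_pos hwpos hb τ j
  rw [← Mw_mul_Ww, ← Mw_mul_Ww, Real.log_mul (Mw_pos hwpos ha j).ne' pa.ne',
    Real.log_mul (Mw_pos hwpos hb j).ne' pb.ne'] at h1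
  have h3 : |Real.log (Ww w a τ j) - Real.log (Ww w b τ j)| ≤ θ := by
    rw [abs_le] at *
    constructor <;> linarith
  have e : Ww w a τ j * (Ww w b τ j)⁻¹ = Real.exp (Real.log (Ww w a τ j) - Real.log (Ww w b τ j)) := by
    rw [Real.exp_sub, Real.exp_log pa, Real.exp_log pb, div_eq_mul_inv]
  rw [e]
  refine (Real.abs_exp_sub_one_le (h3.trans hθ)).trans ?_
  linarith

lemma interf (hwpos : ∀ a ∈ I, ∀ n : ℕ, 1 ≤ n → 0 < w a n) {a b : ℝ} (ha : a ∈ I) (hb : b ∈ I)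
    {D₁ D₂ γ A : ℝ} (hD₂ : 0 < D₂) (hγ : 0 < γ) (hA : 0 < A)
    {t s k' l' j : ℕ} (ht : 1 ≤ t) (hs : γ + 4 ≤ s * γ)
    (hl' : l' = t ^ (s+1)) (hgap : k' + t ^ s ≤ l') (hj : j ≤ l')
    (hMb : Mw w b j ≤ A)
    (hD : D₁ * |a - b| ≤ γ / 2)
    (hlip : |Real.log (Mw w a (j + l')) - Real.log (Mw w b (j + l'))| ≤ D₁ * Real.log ((j + l' : ℕ):ℝ) * |a - b|)
    (hlow : D₂ * ((l' - k' + j : ℕ) : ℝ) ^ γ ≤ Mw w a (l' - k' + j)) :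
    Ww w a k' (l' - k' + j) * (Ww w b l' j)⁻¹ ≤ (A / D₂ * 2 ^ (γ / 2)) / (t:ℝ) ^ 2 := by
  have ht' : (1:ℝ) ≤ t := by exact_mod_cast ht
  have e1 : Ww w a k' (l' - k' + j) = Mw w a (j + l') / Mw w a (l' - k' + j) := by
    rw [eq_div_iff (Mw_pos hwpos ha _).ne', mul_comm, Mw_mul_Ww]
    congr 1
    have : k' ≤ l' := by omega
    omega
  have e2 : (Ww w b l' j)⁻¹ = Mw w b j / Mw w b (j + l') := by
    rw [← Mw_mul_Ww, div_mul_eq_div_div, div_self (Mw_pos hwpos hb _).ne', one_div]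
  have pa := Mw_pos hwpos ha (j + l')
  have pb := Mw_pos hwpos hb (j + l')
  have pa' := Mw_pos hwpos ha (l' - k' + j)
  have hl1 : 1 ≤ l' := hl' ▸ Nat.one_le_pow _ _ ht
  have hjl : (1:ℝ) ≤ ((j + l' : ℕ) : ℝ) := by exact_mod_cast (by omega : 1 ≤ j + l')
  have h1 : Mw w a (j + l') / Mw w b (j + l') ≤ ((j + l' : ℕ) : ℝ) ^ (γ / 2) := by
    rw [← Real.log_le_log_iff (by positivity) (by positivity), Real.log_div pa.ne' pb.ne',
      Real.log_rpow (by positivity)]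
    refine (le_abs_self _).trans (hlip.trans ?_)
    calc _ = (D₁ * |a - b|) * Real.log ((j + l' : ℕ):ℝ) := by ring
      _ ≤ _ := by gcongr
  have h2 : ((j + l' : ℕ) : ℝ) ^ (γ / 2) ≤ 2 ^ (γ / 2) * ((t:ℝ)) ^ ((s+1) * (γ / 2)) := by
    have : ((j + l' : ℕ) : ℝ) ≤ 2 * (t:ℝ) ^ (s+1) := by
      have : j + l' ≤ 2 * t ^ (s+1) := by omega
      exact_mod_cast this
    calc _ ≤ (2 * (t:ℝ) ^ (s+1)) ^ (γ / 2) := by gcongr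
      _ = _ := by
        rw [Real.mul_rpow (by norm_num) (by positivity), ← Real.rpow_natCast, ← Real.rpow_mul (by positivity)]
        push_cast; rfl
  have h3 : D₂ * (t:ℝ) ^ (s * γ) ≤ Mw w a (l' - k' + j) := by
    refine le_trans ?_ hlow
    have : (t:ℝ) ^ s ≤ ((l' - k' + j : ℕ) : ℝ) := by
      have : t ^ s ≤ l' - k' + j := by omega
      exact_mod_cast this
    calc _ = D₂ * ((t:ℝ) ^ s) ^ γ := by rw [← Real.rpow_natCast, ← Real.rpow_mul (by positivity)]
      _ ≤ _ := by gcongr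
  rw [e1, e2]
  calc Mw w a (j + l') / Mw w a (l' - k' + j) * (Mw w b j / Mw w b (j + l'))
      = (Mw w a (j + l') / Mw w b (j + l')) * Mw w b j / Mw w a (l' - k' + j) := by ring
    _ ≤ (2 ^ (γ / 2) * ((t:ℝ)) ^ ((s+1) * (γ / 2))) * A / (D₂ * (t:ℝ) ^ (s * γ)) := by
        have := Mw_pos hwpos hb j
        gcongr
        exact h1.trans h2
    _ = (A / D₂ * 2 ^ (γ / 2)) * (((t:ℝ)) ^ ((s+1) * (γ / 2)) / (t:ℝ) ^ (s * γ)) := by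
        field_simp
    _ ≤ (A / D₂ * 2 ^ (γ / 2)) * (1 / (t:ℝ)^2) := by
        refine mul_le_mul_of_nonneg_left ?_ (by positivity)
        rw [← Real.rpow_sub (by positivity), one_div, ← Real.rpow_natCast (t:ℝ) 2,
          ← Real.rpow_neg (by positivity)]
        apply Real.rpow_le_rpow_of_exponent_le ht'
        push_cast; linarith
    _ = _ := by ring

lemma gap_aux {m k l s : ℕ} (hkl : k < l) :
    (m * (k+1)) ^ (s+1) + m * (m * (l+1)) ^ s ≤ (m * (l+1)) ^ (s+1) := by
  have h1 : (m * (k+1)) ^ s ≤ (m * (l+1)) ^ s := by gcongr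
  have h2 : m * (k+1) + m ≤ m * (l+1) := by
    have : k + 1 + 1 ≤ l + 1 := by omega
    calc _ = m * (k+1+1) := by ring
      _ ≤ _ := by gcongr
  calc _ ≤ (m * (l+1)) ^ s * (m * (k+1)) + m * (m * (l+1)) ^ s := by rw [pow_succ]; gcongr
    _ = (m * (l+1)) ^ s * (m * (k+1) + m) := by ring
    _ ≤ _ := by rw [pow_succ]; gcongr

lemma sum_bound (F : Finset ℕ) (m J : ℕ) (hm : 1 ≤ m) (Kc ε : ℝ) (hK : 0 ≤ Kc)
    (h : (J + 1) * Kc * (∑' k : ℕ, 1 / ((k:ℝ)+1)^2) ≤ ε * m)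
    (g : ℕ → ℕ → ℝ≥0∞)
    (hg : ∀ k ∈ F, ∀ j ≤ J, g k j ≤ ENNReal.ofReal (Kc / ((m * (k+1) : ℕ) : ℝ) ^ 2)) :
    ∑ k ∈ F, ∑ j ∈ range (J+1), g k j ≤ ENNReal.ofReal ε := by
  have hm' : (1:ℝ) ≤ m := by exact_mod_cast hm
  have hsum : Summable (fun k : ℕ => 1 / ((k:ℝ)+1)^2) := by
    have := (summable_nat_add_iff (f := fun k : ℕ => 1 / (k:ℝ)^2) 1).mpr
      (Real.summable_one_div_nat_pow.mpr (by norm_num))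
    simpa using this
  calc ∑ k ∈ F, ∑ j ∈ range (J+1), g k j
      ≤ ∑ k ∈ F, ∑ j ∈ range (J+1), ENNReal.ofReal (Kc / ((m * (k+1) : ℕ) : ℝ) ^ 2) := by
        apply Finset.sum_le_sum; intro k hk
        apply Finset.sum_le_sum; intro j hj
        exact hg k hk j (by have := mem_range.mp hj; omega)
    _ = ENNReal.ofReal (∑ k ∈ F, ∑ j ∈ range (J+1), (Kc / ((m * (k+1) : ℕ) : ℝ) ^ 2)) := by
        rw [ENNReal.ofReal_sum_of_nonneg (fun _ _ => Finset.sum_nonneg fun _ _ => by positivity)]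
        apply Finset.sum_congr rfl; intro k _
        rw [ENNReal.ofReal_sum_of_nonneg (fun _ _ => by positivity)]
    _ ≤ ENNReal.ofReal ε := by
        apply ENNReal.ofReal_le_ofReal
        calc _ = ((J+1) * Kc / m ^ 2) * ∑ k ∈ F, 1 / ((k:ℝ)+1)^2 := by
              rw [Finset.mul_sum]
              apply Finset.sum_congr rfl; intro k _
              rw [Finset.sum_const, card_range, nsmul_eq_mul]
              push_cast
              field_simp
          _ ≤ ((J+1) * Kc / m ^ 2) * (∑' k : ℕ, 1 / ((k:ℝ)+1)^2) := by
              gcongr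
              exact hsum.sum_le_tsum F (fun _ _ => by positivity)
          _ = ((J + 1) * Kc * (∑' k : ℕ, 1 / ((k:ℝ)+1)^2)) / m ^ 2 := by ring
          _ ≤ ε * m / m ^ 2 := by gcongr
          _ = ε / m := by field_simp
          _ ≤ ε := by
              have : 0 ≤ ε * m := le_trans (by positivity) h
              have h0 : 0 ≤ ε := by
                by_contra hc; push Not at hc; nlinarith
              exact div_le_self h0 hm'

lemma tsum_le_pos {α : Type*} (S : Finset α) (pos : α → ℕ) (G : ℕ → ℝ≥0∞)
    (h : ∀ N, G N ≠ 0 → ∃ p ∈ S, pos p = N) : ∑' N, G N ≤ ∑ p ∈ S, G (pos p) := by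
  calc ∑' N, G N ≤ ∑' N, ∑ p ∈ S, if N = pos p then G (pos p) else 0 := by
        apply ENNReal.tsum_le_tsum
        intro N
        by_cases hN : G N = 0
        · rw [hN]; exact zero_le
        · obtain ⟨p, hp, rfl⟩ := h N hN
          refine le_trans ?_ (Finset.single_le_sum (fun _ _ => zero_le) hp)
          simp
    _ = ∑ p ∈ S, ∑' N, if N = pos p then G (pos p) else 0 := by
        rw [Summable.tsum_finsetSum (fun _ _ => ENNReal.summable)]
    _ = _ := by
        apply Finset.sum_congr rfl; intro p _
        rw [tsum_ite_eq]

lemma exists_place {α : Type*} (S : Finset α) (pos : α → ℕ) (hinj : Set.InjOn pos S)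
    (val : α → ℂ) : ∃ u : ℕ → ℂ, (∀ p ∈ S, u (pos p) = val p) ∧
      ∀ N, u N ≠ 0 → ∃ p ∈ S, pos p = N := by
  classical
  refine ⟨fun N => ∑ p ∈ S, if pos p = N then val p else 0, ?_, ?_⟩
  · intro p hp
    dsimp only
    rw [Finset.sum_eq_single_of_mem p hp]
    · simp
    · intro b hb hbp
      rw [if_neg]
      intro h
      exact hbp (hinj hb hp h)
  · intro N hN
    obtain ⟨p, hp, h⟩ := Finset.exists_ne_zero_of_sum_ne_zero hN
    refine ⟨p, hp, ?_⟩
    by_contra hc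
    simp [hc] at h
end est

set_option maxHeartbeats 2000000 in
lemma key_stage {I : Set ℝ} {w : ℝ → ℕ → ℝ} (d : ℕ) (hd : 1 ≤ d)
    (hwpos : ∀ a ∈ I, ∀ n : ℕ, 1 ≤ n → 0 < w a n)
    (hwbdd : ∀ a ∈ I, ∃ C : ℝ, ∀ n : ℕ, 1 ≤ n → w a n ≤ C)
    (hwcont : ∀ n : ℕ, ContinuousOn (fun a => w a n) I)
    (hcrit : ∀ I₀ ⊆ I, IsCompact I₀ →
      ∃ D₁ > (0 : ℝ), ∃ D₂ > (0 : ℝ), ∃ γ > (0 : ℝ), ∃ N : ℕ, ∀ n : ℕ, N ≤ n →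
        (∀ a ∈ I₀, ∀ b ∈ I₀, |Real.log (Mw w a n) - Real.log (Mw w b n)| ≤ D₁ * Real.log n * |a - b|) ∧
        (∀ a ∈ I₀, D₂ * (n : ℝ) ^ γ ≤ Mw w a n))
    (C : Set ℝ) (hC : C ⊆ I) (hCc : IsCompact C) :
    ∃ ε₀ > (0:ℝ), ∀ (c : Fin d → ℝ) (r : ℕ) (_ : 1 ≤ r) (y : Fin d → ℕ → ℂ) (J : ℕ)
      (_ : ∀ i j, J < j → y i j = 0) (Q : Set ℝ) (_ : Q ⊆ I) (_ : IsCompact Q) (L : ℕ) (ε : ℝ) (_ : 0 < ε),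
      ∃ (u : Fin d → ℕ → ℂ) (L' : ℕ), L < L' ∧
        (∀ i N, (N ≤ L ∨ L' < N) → u i N = 0) ∧
        (∀ i, ∑' N, ‖u i N‖ₑ ≤ ENNReal.ofReal ε) ∧
        (∀ n ≤ L, ∀ i, ∀ a ∈ Q, ∑' j, ENNReal.ofReal (Ww w a n j) * ‖u i (j + n)‖ₑ ≤ ENNReal.ofReal ε) ∧
        (∀ lam : Fin d → ℝ, (∀ i, lam i ∈ C ∧ |lam i - c i| ≤ ε₀) → ∃ n, L < n ∧ n ≤ L' ∧
          ∀ i, ∑' j, ‖(Ww w (lam i) n j : ℂ) * u i (j + n) ^ r - y i j‖ₑ ≤ ENNReal.ofReal ε) := by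
  obtain ⟨D₁, hD₁, D₂, hD₂, γ, hγ, N₀, hN₀⟩ := hcrit C hC hCc
  refine ⟨γ / (4 * D₁), by positivity, ?_⟩
  intro c r hr y J hy Q hQ hQc L ε hε
  have hr' : (0:ℝ) < r := by exact_mod_cast hr
  -- exponents
  obtain ⟨s, hs⟩ := exists_nat_ge ((γ + 4 + 4 * r) / γ)
  rw [div_le_iff₀ hγ] at hs
  have hs1 : 1 ≤ s := by
    rcases Nat.eq_zero_or_pos s with h | h
    · subst h; simp at hs; nlinarith
    · exact h
  -- roots
  have hroot : ∀ i j, ∃ z : ℂ, z ^ r = y i j := fun i j => IsAlgClosed.exists_pow_nat_eq _ hr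
  choose η hη using hroot
  obtain ⟨H, hH0, hH⟩ : ∃ H : ℝ, 0 < H ∧ ∀ i, ∀ j ≤ J, ‖η i j‖ ≤ H := by
    refine ⟨1 + ∑ i, ∑ j ∈ range (J+1), ‖η i j‖, by positivity, fun i j hj => ?_⟩
    have h1 := Finset.single_le_sum (f := fun j => ‖η i j‖) (fun _ _ => norm_nonneg _) (mem_range.mpr (Nat.lt_succ_of_le hj))
    have h2 := Finset.single_le_sum (f := fun i => ∑ j ∈ range (J+1), ‖η i j‖)
      (fun _ _ => Finset.sum_nonneg fun _ _ => norm_nonneg _) (mem_univ i)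
    linarith
  set Y : ℝ := H ^ r with hY
  have hY0 : 0 < Y := by positivity
  have hyY : ∀ i, ∀ j ≤ J, ‖y i j‖ ≤ Y := by
    intro i j hj
    rw [← hη, norm_pow]
    exact pow_le_pow_left₀ (norm_nonneg _) (hH i j hj) r
  obtain ⟨A, hA0, hA⟩ := Mw_bdd hwcont C hC hCc J
  set β : ℝ := γ / (2 * r) with hβ
  have hβ0 : 0 < β := by positivity
  obtain ⟨A', hA'1, hA'⟩ : ∃ A : ℝ, 1 ≤ A ∧ ∀ n ≤ L, ∀ a ∈ Q, ∀ j : ℕ, Ww w a n j ≤ A * ((j + n + 1 : ℕ):ℝ) ^ β := by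
    obtain ⟨E₁, hE₁, _, _, _, _, N₁, hN₁⟩ := hcrit Q hQ hQc
    exact Ww_growth hwpos hwbdd hwcont Q hQ hQc E₁ hE₁ N₁ (fun n hn => (hN₁ n hn).1) L β hβ0
  -- constants
  set K1 : ℝ := A' * 2 ^ β * (H * (D₂ / A) ^ (-(1 / (r:ℝ)))) with hK1
  have hK10 : 0 < K1 := by positivity
  set K2 : ℝ := Y * (A / D₂ * 2 ^ (γ / 2)) with hK2
  have hK20 : 0 < K2 := by positivity
  set Z : ℝ := ∑' k : ℕ, 1 / ((k:ℝ)+1)^2 with hZ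
  set θ : ℝ := min 1 (ε / (4 * (J+1) * Y)) with hθ
  have hθ0 : 0 < θ := by positivity
  have hθ1 : θ ≤ 1 := min_le_left _ _
  have hθ2 : (J+1) * (2 * θ * Y) ≤ ε / 2 := by
    have : θ ≤ ε / (4 * (J+1) * Y) := min_le_right _ _
    rw [le_div_iff₀ (by positivity)] at this
    linarith
  set δ : ℝ := θ / (4 * D₁) with hδ
  have hδ0 : 0 < δ := by positivity
  obtain ⟨ρ, hρ0, hρ⟩ := log_unif hwpos hwcont C hC hCc J (θ / 2) (by positivity)
  obtain ⟨m, hm2, hmN, hmL, hmJ, hmρ, hmK1, hmK2⟩ : ∃ m : ℕ, 2 ≤ m ∧ N₀ ≤ m ∧ L + 1 ≤ m ∧ J + 1 ≤ m ∧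
      δ / ρ ≤ Real.log m ∧ (J + 1) * K1 * Z ≤ ε * m ∧ (J + 1) * K2 * Z ≤ ε / 2 * m := by
    have t1 : Filter.Tendsto (fun m : ℕ => Real.log m) Filter.atTop Filter.atTop :=
      Real.tendsto_log_atTop.comp tendsto_natCast_atTop_atTop
    have t2 : Filter.Tendsto (fun m : ℕ => ε * (m:ℝ)) Filter.atTop Filter.atTop :=
      tendsto_natCast_atTop_atTop.const_mul_atTop hε
    have t3 : Filter.Tendsto (fun m : ℕ => ε / 2 * (m:ℝ)) Filter.atTop Filter.atTop :=
      tendsto_natCast_atTop_atTop.const_mul_atTop (by positivity)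
    exact ((Filter.eventually_ge_atTop 2).and ((Filter.eventually_ge_atTop N₀).and
      ((Filter.eventually_ge_atTop (L+1)).and ((Filter.eventually_ge_atTop (J+1)).and
      ((t1.eventually_ge_atTop _).and ((t2.eventually_ge_atTop _).and (t3.eventually_ge_atTop _))))))).exists
  set τ : ℕ → ℕ := fun k => (m * (k+1)) ^ (s+1) with hτ
  have htk : ∀ k, m ≤ m * (k+1) := fun k => Nat.le_mul_of_pos_right _ (by omega)
  have hτm : ∀ k, m ≤ τ k := fun k => (htk k).trans (Nat.le_self_pow (by omega) _)
  have hgap : ∀ k l, k < l → τ k + m * (m * (l+1)) ^ s ≤ τ l := fun k l h => gap_aux h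
  have hgap1 : ∀ k l, k < l → τ k + m ≤ τ l := fun k l h => by
    refine le_trans ?_ (hgap k l h)
    have : 1 ≤ (m * (l+1)) ^ s := Nat.one_le_pow _ _ (by have := htk l; omega)
    have := Nat.le_mul_of_pos_right m this
    omega
  have hlogm : 0 < Real.log m := Real.log_pos (by exact_mod_cast (by omega : 1 < m))
  have hlogτ : ∀ k, Real.log m ≤ Real.log (τ k) := fun k =>
    Real.log_le_log (by exact_mod_cast (by omega : 0 < m)) (by exact_mod_cast hτm k)
  set K : Set (Fin d → ℝ) := {lam | ∀ i, lam i ∈ C ∧ |lam i - c i| ≤ γ / (4 * D₁)} with hK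
  obtain ⟨R, hR⟩ : ∃ R : ℝ, K ⊆ Metric.ball 0 R := by
    refine ⟨dist c 0 + γ / (4 * D₁) + 1, fun lam hlam => ?_⟩
    have : dist lam c ≤ γ / (4 * D₁) := (dist_pi_le_iff (by positivity)).mpr fun i => (hlam i).2
    have := dist_triangle lam c 0
    rw [Metric.mem_ball]; linarith
  obtain ⟨M, cc, hcc, hcover⟩ := cover_aux K R hR (fun k => δ / Real.log (τ k))
    (fun k => div_pos hδ0 (hlogm.trans_le (hlogτ k)))
    (by
      intro k l hkl
      apply div_le_div_of_nonneg_left hδ0.le (hlogm.trans_le (hlogτ k))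
      apply Real.log_le_log
      · exact_mod_cast (by have := hτm k; omega : 0 < τ k)
      · rcases hkl.eq_or_lt with h | h
        · rw [h]
        · exact_mod_cast (by have := hgap1 k l h; omega : τ k ≤ τ l))
    (not_summable_aux d hd δ hδ0 m (s+1) hm2 (by omega))
  -- the vector
  set S : Finset (ℕ × ℕ) := range M ×ˢ range (J+1) with hS
  set pos : ℕ × ℕ → ℕ := fun q => q.2 + τ q.1 with hpos
  have hinj : Set.InjOn pos S := by
    rintro ⟨k, j⟩ h1 ⟨l, j'⟩ h2 h
    simp only [hS, coe_product, Set.mem_prod, mem_coe, mem_range] at h1 h2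
    simp only [hpos] at h
    rcases lt_trichotomy k l with h' | h' | h'
    · have := hgap1 k l h'; omega
    · subst h'; simp; omega
    · have := hgap1 l k h'; omega
  set val : Fin d → ℕ × ℕ → ℂ := fun i q =>
    η i q.2 * (((Ww w (cc q.1 i) (τ q.1) q.2) ^ (-(1 / (r:ℝ))) : ℝ) : ℂ) with hval
  have hu := fun i => exists_place S pos hinj (val i)
  choose u hu1 hu2 using hu
  have hccI : ∀ k < M, ∀ i, cc k i ∈ C := fun k hk i => (hcc k hk i).1
  have hu1' : ∀ i, ∀ k < M, ∀ j ≤ J, u i (j + τ k) = val i (k, j) := fun i k hk j hj =>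
    hu1 i (k, j) (by simp [hS]; omega)
  have hu2' : ∀ i N, u i N ≠ 0 → ∃ k < M, ∃ j ≤ J, N = j + τ k := by
    intro i N hN
    obtain ⟨⟨k, j⟩, hq, h⟩ := hu2 i N hN
    simp only [hS, mem_product, mem_range] at hq
    exact ⟨k, hq.1, j, by omega, h.symm⟩
  -- weighted l1 bound
  have hgen : ∀ i (V : ℕ → ℝ), (∀ N, V N ≤ A' * ((N + 1 : ℕ):ℝ) ^ β) →
      ∑' N, ENNReal.ofReal (V N) * ‖u i N‖ₑ ≤ ENNReal.ofReal ε := by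
    intro i V hV
    refine (tsum_le_pos S pos _ ?_).trans ?_
    · intro N hN
      apply hu2 i N
      intro h0
      simp [h0] at hN
    rw [hS, Finset.sum_product]
    refine sum_bound (range M) m J (by omega) K1 ε hK10.le hmK1
      (fun k j => ENNReal.ofReal (V (pos (k, j))) * ‖u i (pos (k, j))‖ₑ) ?_
    intro k hk j hj
    have hk := mem_range.mp hk
    rw [hu1' i k hk j hj, ← ofReal_norm]
    have hτ1 : 1 ≤ τ k := by have := hτm k; omega
    have hτ1' : (1:ℝ) ≤ τ k := by exact_mod_cast hτ1
    have hWl := W_lower hwpos (hC (hccI k hk i)) hD₂ hγ hA0 (hA j hj _ (hccI k hk i))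
      ((hN₀ (j + τ k) (by have := hτm k; omega)).2 _ (hccI k hk i))
    have hvb := val_bound (div_pos hD₂ hA0) (τ k) r hτ1 hr hWl (η i j) (hH i j hj)
    have hVb : V (j + τ k) ≤ A' * (2 * (τ k : ℝ)) ^ β := by
      refine (hV _).trans ?_
      gcongr
      exact_mod_cast (by have := hτm k; omega : j + τ k + 1 ≤ 2 * τ k)
    have hfin : (A' * (2 * (τ k : ℝ)) ^ β) * (H * (D₂ / A) ^ (-(1 / (r:ℝ))) * (τ k:ℝ) ^ (-(γ / r)))
        ≤ K1 / ((m * (k+1) : ℕ) : ℝ) ^ 2 := by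
      have e : (τ k : ℝ) ^ β * (τ k:ℝ) ^ (-(γ / r)) = (τ k : ℝ) ^ (-β) := by
        rw [← Real.rpow_add (by positivity)]
        congr 1
        rw [hβ]; field_simp; ring
      have hd := pow_decay (t := m * (k+1)) (s := s+1) (x := β) (by have := htk k; omega) (by
        rw [hβ, mul_div_assoc', le_div_iff₀ (by positivity)]
        push_cast
        linarith)
      calc _ = K1 * ((τ k : ℝ) ^ β * (τ k:ℝ) ^ (-(γ / r))) := by
            rw [Real.mul_rpow (by norm_num) (by positivity), hK1]; ring
        _ = K1 * (τ k : ℝ) ^ (-β) := by rw [e]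
        _ ≤ K1 * (1 / ((m * (k+1) : ℕ) : ℝ) ^ 2) := mul_le_mul_of_nonneg_left hd hK10.le
        _ = _ := by ring
    calc _ ≤ ENNReal.ofReal (A' * (2 * (τ k : ℝ)) ^ β) * ENNReal.ofReal (H * (D₂ / A) ^ (-(1 / (r:ℝ))) * (τ k:ℝ) ^ (-(γ / r))) := by
          gcongr
      _ = ENNReal.ofReal ((A' * (2 * (τ k : ℝ)) ^ β) * (H * (D₂ / A) ^ (-(1 / (r:ℝ))) * (τ k:ℝ) ^ (-(γ / r)))) :=
          (ENNReal.ofReal_mul (by positivity)).symm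
      _ ≤ _ := ENNReal.ofReal_le_ofReal hfin
  refine ⟨u, L + 1 + ∑ k ∈ range M, (τ k + J + 1), by omega, ?_, ?_, ?_, ?_⟩
  · intro i N hN
    by_contra h0
    obtain ⟨k, hk, j, hj, rfl⟩ := hu2' i N h0
    have h1 := hτm k
    have h2 := Finset.single_le_sum (f := fun k => τ k + J + 1) (fun _ _ => Nat.zero_le _) (mem_range.mpr hk)
    omega
  · intro i
    have := hgen i (fun _ => 1) (fun N => by
      have h1 : (1:ℝ) ≤ ((N + 1 : ℕ):ℝ) ^ β := Real.one_le_rpow (by push_cast; linarith [(Nat.cast_nonneg N : (0:ℝ) ≤ N)]) hβ0.le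
      nlinarith)
    simpa using this
  · intro n hn i a ha
    have := hgen i (fun N => if n ≤ N then Ww w a n (N - n) else 0) (fun N => by
      split_ifs with h
      · have := hA' n hn a ha (N - n)
        rwa [Nat.sub_add_cancel h] at this
      · positivity)
    refine le_trans ?_ this
    refine le_trans (le_of_eq ?_) (ENNReal.tsum_comp_le_tsum_of_injective (add_left_injective n) _)
    apply tsum_congr; intro j
    simp
  · intro lam hlam
    obtain ⟨k, hk, hdist⟩ := hcover lam hlam
    have hmk := hτm k
    have hle := Finset.single_le_sum (f := fun k => τ k + J + 1) (fun _ _ => Nat.zero_le _) (mem_range.mpr hk)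
    refine ⟨τ k, by omega, by omega, fun i => ?_⟩
    have hla := (hlam i).1
    have hlaI := hC hla
    set G : ℕ → ℝ≥0∞ := fun j => ‖(Ww w (lam i) (τ k) j : ℂ) * u i (j + τ k) ^ r - y i j‖ₑ with hG
    have hup : ∀ l < M, ∀ j ≤ J, u i (j + τ l) ^ r = y i j * (((Ww w (cc l i) (τ l) j)⁻¹ : ℝ) : ℂ) := by
      intro l hl j hj
      rw [hu1' i l hl j hj, hval, val_pow (Ww_pos hwpos (hC (hccI l hl i)) _ _) r hr, hη]
    have hsplit : ∑' j, G j ≤ ∑ j ∈ range (J+1), G j +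
        ∑ l ∈ Finset.Ioo k M, ∑ j ∈ range (J+1), G (τ l - τ k + j) := by
      have := tsum_le_pos ((range (J+1)).disjSum (Finset.Ioo k M ×ˢ range (J+1)))
        (Sum.elim (fun j => j) (fun q => τ q.1 - τ k + q.2)) G ?_
      · rw [Finset.sum_disjSum] at this
        simpa only [Sum.elim_inl, Sum.elim_inr, Finset.sum_product] using this
      · intro j hj
        by_cases hjJ : j ≤ J
        · exact ⟨Sum.inl j, by simp; omega, rfl⟩
        · have : u i (j + τ k) ≠ 0 := by
            intro h0
            simp [hG, h0, hy i j (by omega)] at hj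
            omega
          obtain ⟨l, hl, j', hj', e⟩ := hu2' i _ this
          have hkl : k < l := by
            rcases lt_trichotomy k l with h' | h' | h'
            · exact h'
            · subst h'; omega
            · have := hgap1 l k h'; omega
          have := hgap1 k l hkl
          refine ⟨Sum.inr (l, j'), by simp; omega, ?_⟩
          simp only [Sum.elim_inr]
          omega
    have hmain : ∑ j ∈ range (J+1), G j ≤ ENNReal.ofReal (ε / 2) := by
      calc _ ≤ ∑ j ∈ range (J+1), ENNReal.ofReal (2 * θ * Y) := by
            apply Finset.sum_le_sum
            intro j hj
            have hj : j ≤ J := by have := mem_range.mp hj; omega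
            simp only [hG]
            rw [hup k hk j hj, ← ofReal_norm]
            apply ENNReal.ofReal_le_ofReal
            have hda : |lam i - cc k i| < δ / Real.log (τ k) :=
              lt_of_le_of_lt (dist_le_pi_dist lam (cc k) i) hdist
            have hlτ := hlogm.trans_le (hlogτ k)
            have l1 : |Real.log (Mw w (lam i) (j + τ k)) - Real.log (Mw w (cc k i) (j + τ k))| ≤ θ / 2 := by
              refine ((hN₀ (j + τ k) (by omega)).1 _ hla _ (hccI k hk i)).trans ?_
              have hlog2 : Real.log ((j + τ k : ℕ) : ℝ) ≤ 2 * Real.log (τ k) := by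
                have : j + τ k ≤ τ k ^ 2 := by nlinarith
                calc _ ≤ Real.log ((τ k : ℝ) ^ 2) := by
                      apply Real.log_le_log
                      · exact_mod_cast (by omega : 0 < j + τ k)
                      · exact_mod_cast this
                  _ = _ := by rw [Real.log_pow]; norm_num
              calc _ ≤ D₁ * (2 * Real.log (τ k)) * (δ / Real.log (τ k)) := by
                    gcongr
                _ = θ / 2 := by rw [hδ]; field_simp; norm_num
            have l2 := hρ j hj (lam i) hla (cc k i) (hccI k hk i) (hda.trans_le (by
              rw [div_le_iff₀ hlτ]
              rw [div_le_iff₀ hρ0] at hmρ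
              have := hlogτ k
              nlinarith))
            have hrat := W_ratio hwpos hlaI (hC (hccI k hk i)) hθ1 l1 l2
            have e : (Ww w (lam i) (τ k) j : ℂ) * (y i j * (((Ww w (cc k i) (τ k) j)⁻¹ : ℝ) : ℂ)) - y i j
                = ((Ww w (lam i) (τ k) j * (Ww w (cc k i) (τ k) j)⁻¹ - 1 : ℝ) : ℂ) * y i j := by
              push_cast; ring
            rw [e, norm_mul, Complex.norm_real, Real.norm_eq_abs]
            exact mul_le_mul hrat (hyY i j hj) (norm_nonneg _) (by positivity)
        _ = ENNReal.ofReal ((J+1) * (2 * θ * Y)) := by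
            rw [Finset.sum_const, card_range, nsmul_eq_mul, ENNReal.ofReal_mul (p := (J:ℝ)+1) (by positivity)]
            congr 1
            rw [← ENNReal.ofReal_natCast]
            push_cast; rfl
        _ ≤ _ := ENNReal.ofReal_le_ofReal hθ2
    have h_inter : ∑ l ∈ Finset.Ioo k M, ∑ j ∈ range (J+1), G (τ l - τ k + j) ≤ ENNReal.ofReal (ε / 2) := by
      refine sum_bound _ m J (by omega) K2 (ε / 2) hK20.le hmK2 (fun l j => G (τ l - τ k + j)) ?_
      intro l hl j hj
      obtain ⟨hkl, hlM⟩ := Finset.mem_Ioo.mp hl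
      have hg1 := hgap1 k l hkl
      have hg2 := hgap k l hkl
      have hml := htk l
      have hcl := hccI l hlM i
      simp only [hG]
      rw [hy i _ (by omega), sub_zero, (by omega : τ l - τ k + j + τ k = j + τ l), hup l hlM j hj,
        ← ofReal_norm]
      apply ENNReal.ofReal_le_ofReal
      have hab : D₁ * |lam i - cc l i| ≤ γ / 2 := by
        have h1 := (hlam i).2
        have h2 := (hcc l hlM i).2
        have h3 : |lam i - cc l i| ≤ 2 * (γ / (4 * D₁)) := by
          rw [abs_le] at *
          constructor <;> linarith
        calc _ ≤ D₁ * (2 * (γ / (4 * D₁))) := by gcongr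
          _ = γ / 2 := by field_simp; norm_num
      have := interf hwpos hlaI (hC hcl) hD₂ hγ hA0 (t := m * (l+1)) (s := s) (k' := τ k) (l' := τ l) (j := j)
        (by omega) (by linarith) rfl (by
          refine le_trans ?_ hg2
          have : (m * (l+1)) ^ s ≤ m * (m * (l+1)) ^ s := Nat.le_mul_of_pos_left _ (by omega)
          omega) (by omega) (hA j hj _ hcl) hab
        ((hN₀ (j + τ l) (by omega)).1 _ hla _ hcl)
        ((hN₀ (τ l - τ k + j) (by omega)).2 _ hla)
      have e : (Ww w (lam i) (τ k) (τ l - τ k + j) : ℂ) * (y i j * (((Ww w (cc l i) (τ l) j)⁻¹ : ℝ) : ℂ))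
          = y i j * ((Ww w (lam i) (τ k) (τ l - τ k + j) * (Ww w (cc l i) (τ l) j)⁻¹ : ℝ) : ℂ) := by
        push_cast; ring
      have p1 := Ww_pos hwpos hlaI (τ k) (τ l - τ k + j)
      have p2 := Ww_pos hwpos (hC hcl) (τ l) j
      rw [e, norm_mul, Complex.norm_real, Real.norm_of_nonneg (by positivity)]
      calc _ ≤ Y * ((A / D₂ * 2 ^ (γ / 2)) / ((m * (l+1) : ℕ):ℝ) ^ 2) :=
            mul_le_mul (hyY i j hj) this (by positivity) hY0.le
        _ = _ := by rw [hK2]; ring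
    calc ∑' j, G j ≤ _ := hsplit
      _ ≤ ENNReal.ofReal (ε / 2) + ENNReal.ofReal (ε / 2) := add_le_add hmain h_inter
      _ = ENNReal.ofReal ε := by rw [← ENNReal.ofReal_add (by positivity) (by positivity)]; congr 1; ring

/-! ### Assembly -/

lemma enorm_hasSum_le {E : Type*} [NormedAddCommGroup E] {f : ℕ → E} {a : E} (h : HasSum f a) :
    ‖a‖ₑ ≤ ∑' n, ‖f n‖ₑ := by
  have h1 : Filter.Tendsto (fun s : Finset ℕ => ‖∑ n ∈ s, f n‖ₑ) Filter.atTop (nhds ‖a‖ₑ) :=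
    (continuous_enorm.tendsto a).comp h
  refine le_of_tendsto' h1 fun s => ?_
  exact (enorm_sum_le s f).trans (ENNReal.sum_le_tsum s)

lemma lp_enorm_le (p : ℝ≥0∞) [Fact (1 ≤ p)] (hp : p ≠ ⊤) (v : lpC p) :
    ‖v‖ₑ ≤ ∑' n, ‖v n‖ₑ := by
  have hp0 : 0 < p := lt_of_lt_of_le one_pos (Fact.out : 1 ≤ p)
  refine (enorm_hasSum_le (lp.hasSum_single hp v)).trans (le_of_eq (tsum_congr fun n => ?_))
  rw [← ofReal_norm, ← ofReal_norm, lp.norm_single hp0]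

lemma memlp_of_l1 (p : ℝ≥0∞) [Fact (1 ≤ p)] (f : ℕ → ℂ) (h : ∑' n, ‖f n‖ₑ ≠ ⊤) :
    Memℓp (E := fun _ : ℕ => ℂ) f p := by
  have hs : Summable (fun n => ‖f n‖) := by
    have := ENNReal.summable_toReal h
    simpa using this
  refine Memℓp.of_exponent_ge (q := 1) ?_ (Fact.out : 1 ≤ p)
  apply memℓp_gen
  simpa using hs

lemma poly_aux (P : Polynomial ℂ) (hP : P ≠ 0) (h0 : P.coeff 0 = 0) :
    ∃ (r : ℕ) (a : ℂ) (B : ℝ), 1 ≤ r ∧ a ≠ 0 ∧ 0 ≤ B ∧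
      ∀ z : ℂ, ‖z‖ ≤ 1 → ‖P.eval z - a * z ^ r‖ ≤ B * ‖z‖ ^ (r+1) := by
  obtain ⟨q, hq, hnd⟩ := Polynomial.exists_eq_pow_rootMultiplicity_mul_and_not_dvd P hP 0
  rw [Polynomial.C_0, sub_zero] at hq hnd
  set r := P.rootMultiplicity 0
  have hr : 1 ≤ r := by
    rcases Nat.eq_zero_or_pos r with h | h
    · exfalso
      rw [h, pow_zero, one_mul] at hq
      rw [hq] at h0
      exact hnd (Polynomial.X_dvd_iff.mpr h0)
    · exact h
  obtain ⟨B, hB⟩ := ((isCompact_closedBall (0:ℂ) 1).image q.divX.continuous).isBounded.exists_norm_le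
  refine ⟨r, q.coeff 0, max B 0, hr, fun h => hnd (Polynomial.X_dvd_iff.mpr h), le_max_right _ _, ?_⟩
  intro z hz
  have e : P.eval z - q.coeff 0 * z ^ r = q.divX.eval z * z ^ (r+1) := by
    conv_lhs => rw [hq, ← Polynomial.divX_mul_X_add q]
    simp
    ring
  rw [e, norm_mul, norm_pow]
  gcongr
  exact (hB _ ⟨z, by simpa using hz, rfl⟩).trans (le_max_left _ _)

/-- finitely supported vectors with entries in a fixed dense sequence -/
def yfun (d : ℕ) (t : Σ J : ℕ, Fin d → Fin (J+1) → ℕ) (i : Fin d) (j : ℕ) : ℂ :=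
  if h : j < t.1 + 1 then TopologicalSpace.denseSeq ℂ (t.2 i ⟨j, h⟩) else 0

lemma yfun_sum_lt (d : ℕ) (t : Σ J : ℕ, Fin d → Fin (J+1) → ℕ) (i : Fin d) :
    ∑' j, ‖yfun d t i j‖ₑ ≠ ⊤ := by
  rw [tsum_eq_sum (s := range (t.1 + 1))]
  · exact ENNReal.sum_ne_top.mpr fun _ _ => enorm_ne_top
  · intro j hj
    simp only [mem_range] at hj
    simp [yfun, hj]

lemma dense_aux (p : ℝ≥0∞) [Fact (1 ≤ p)] (hp : p ≠ ⊤) (d : ℕ) (v : Fin d → lpC p) (δ : ℝ) (hδ : 0 < δ) :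
    ∃ t : Σ J : ℕ, Fin d → Fin (J+1) → ℕ, ∃ yL : Fin d → lpC p,
      (∀ i j, yL i j = yfun d t i j) ∧ ∀ i, ‖yL i - v i‖ < δ := by
  have hp0 : 0 < p := lt_of_lt_of_le one_pos (Fact.out : 1 ≤ p)
  have h1 : ∀ᶠ J : ℕ in Filter.atTop, ∀ i, ‖∑ j ∈ range J, lp.single p j (v i j) - v i‖ < δ / 2 := by
    rw [Filter.eventually_all]
    intro i
    have := (lp.hasSum_single hp (v i)).tendsto_sum_nat
    rw [Metric.tendsto_nhds] at this
    simpa [dist_eq_norm] using this (δ / 2) (by positivity)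
  obtain ⟨J₀, hJ₀⟩ := Filter.eventually_atTop.mp h1
  set J := J₀ with hJ
  have hJ1 := hJ₀ (J+1) (by omega)
  have hap : ∀ (i : Fin d) (j : Fin (J+1)), ∃ k : ℕ, ‖TopologicalSpace.denseSeq ℂ k - v i j‖ < δ / (2 * (J+1)) := by
    intro i j
    obtain ⟨_, hz, k, rfl⟩ := Metric.dense_iff.mp (TopologicalSpace.denseRange_denseSeq ℂ) (v i j) (δ / (2 * (J+1))) (by positivity)
    exact ⟨k, by simpa [dist_eq_norm] using hz⟩
  choose f hf using hap
  refine ⟨⟨J, f⟩, fun i => ∑ j ∈ range (J+1), lp.single p j (yfun d ⟨J, f⟩ i j), ?_, ?_⟩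
  · intro i j
    rw [lp.coeFn_sum, Finset.sum_apply]
    by_cases hj : j < J + 1
    · rw [Finset.sum_eq_single_of_mem j (mem_range.mpr hj)]
      · simp
      · intro b _ hb
        simp [lp.single_apply, hb.symm]
    · rw [Finset.sum_eq_zero]
      · simp [yfun, hj]
      · intro b hb
        have : j ≠ b := by have := mem_range.mp hb; omega
        simp [lp.single_apply, this]
  · intro i
    have e : ∑ j ∈ range (J+1), lp.single p j (yfun d ⟨J, f⟩ i j) - v i
        = ∑ j ∈ range (J+1), lp.single (E := fun _ : ℕ => ℂ) p j (yfun d ⟨J, f⟩ i j - v i j) +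
          (∑ j ∈ range (J+1), lp.single p j (v i j) - v i) := by
      simp only [lp.single_sub, Finset.sum_sub_distrib]
      abel
    rw [e]
    have hb : ‖∑ j ∈ range (J+1), lp.single (E := fun _ : ℕ => ℂ) p j (yfun d ⟨J, f⟩ i j - v i j)‖ ≤ δ / 2 := by
      calc _ ≤ ∑ j ∈ range (J+1), δ / (2 * (J+1)) := by
            refine norm_sum_le_of_le _ fun j hj => ?_
            rw [lp.norm_single hp0]
            have hj := mem_range.mp hj
            simp only [yfun, hj, dif_pos]
            exact (hf i ⟨j, hj⟩).le
        _ = δ / 2 := by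
            rw [Finset.sum_const, card_range, nsmul_eq_mul]; push_cast; field_simp
    exact (norm_add_le _ _).trans_lt (by linarith [hJ1 i])

lemma pow_shift {p : ℝ≥0∞} [Fact (1 ≤ p)] {d : ℕ} {w : ℝ → ℕ → ℝ}
    {T : (Fin d → lpC p) →L[ℂ] (Fin d → lpC p)} {lam : Fin d → ℝ} (h : IsProductShift p d w T lam)
    (n : ℕ) (v : Fin d → lpC p) (i : Fin d) (j : ℕ) :
    ((T ^ n) v) i j = (Ww w (lam i) n j : ℂ) * v i (j + n) := by
  induction n generalizing v with
  | zero => simp [Ww]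
  | succ n ih =>
    rw [pow_succ, mul_apply_eq_comp, ih (T v), h v i (j+n), Ww, Ww, Finset.prod_range_succ]
    push_cast
    rw [mul_assoc]; rfl

abbrev STask (d : ℕ) : Type := ℕ × (Fin d → ℚ) × ℕ × (Σ J : ℕ, Fin d → Fin (J+1) → ℕ)

lemma build_stages {I : Set ℝ} {w : ℝ → ℕ → ℝ} (d : ℕ) (C : ℕ → Set ℝ) (ε₀ : ℕ → ℝ)
    (hCI : ∀ k, C k ⊆ I) (hCc : ∀ k, IsCompact (C k))
    (hkey : ∀ k, ∀ (c : Fin d → ℝ) (r : ℕ) (_ : 1 ≤ r) (y : Fin d → ℕ → ℂ) (J : ℕ)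
      (_ : ∀ i j, J < j → y i j = 0) (Q : Set ℝ) (_ : Q ⊆ I) (_ : IsCompact Q) (L : ℕ) (ε : ℝ)
      (_ : 0 < ε),
      ∃ (u : Fin d → ℕ → ℂ) (L' : ℕ), L < L' ∧ (∀ i N, (N ≤ L ∨ L' < N) → u i N = 0) ∧
       (∀ i, ∑' N, ‖u i N‖ₑ ≤ ENNReal.ofReal ε) ∧
       (∀ n ≤ L, ∀ i, ∀ a ∈ Q, ∑' j, ENNReal.ofReal (Ww w a n j) * ‖u i (j+n)‖ₑ
          ≤ ENNReal.ofReal ε) ∧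
       (∀ lam : Fin d → ℝ, (∀ i, lam i ∈ C k ∧ |lam i - c i| ≤ ε₀ k) →
          ∃ n, L < n ∧ n ≤ L' ∧ ∀ i, ∑' j, ‖(Ww w (lam i) n j : ℂ) * u i (j+n)^r - y i j‖ₑ
            ≤ ENNReal.ofReal ε)) :
    ∃ (task : ℕ → STask d) (Ls : ℕ → ℕ) (u : ℕ → Fin d → ℕ → ℂ),
      (∀ t M, ∃ m, M < m ∧ task m = t) ∧ Ls 0 = 0 ∧ (∀ m, Ls m < Ls (m+1)) ∧
      (∀ m i N, (N ≤ Ls m ∨ Ls (m+1) < N) → u m i N = 0) ∧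
      (∀ m i, ∑' N, ‖u m i N‖ₑ ≤ ENNReal.ofReal ((1/2)^m)) ∧
      (∀ m m', m < m' → ∀ n ≤ Ls m', ∀ i, ∀ a ∈ C (task m).1,
        ∑' j, ENNReal.ofReal (Ww w a n j) * ‖u m' i (j+n)‖ₑ ≤ ENNReal.ofReal ((1/2)^m')) ∧
      (∀ m, ∀ lam : Fin d → ℝ,
        (∀ i, lam i ∈ C (task m).1 ∧ |lam i - (task m).2.1 i| ≤ ε₀ (task m).1) →
        ∃ n, Ls m < n ∧ n ≤ Ls (m+1) ∧ ∀ i,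
          ∑' j, ‖(Ww w (lam i) n j : ℂ) * u m i (j+n)^((task m).2.2.1 + 1)
            - yfun d (task m).2.2.2 i j‖ₑ ≤ ENNReal.ofReal ((1/2)^m)) := by
  obtain ⟨f, hf⟩ := exists_surjective_nat (STask d × ℕ)
  set task : ℕ → STask d := fun m => (f m).1 with htask
  have hstep : ∀ m L : ℕ, _ := fun m L => hkey (task m).1 (fun i => ((task m).2.1 i : ℝ))
    ((task m).2.2.1 + 1) (by omega) (yfun d (task m).2.2.2) (task m).2.2.2.1
    (by
      intro i j hj
      simp only [yfun]
      rw [dif_neg (by omega)])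
    (⋃ i ∈ range m, C (task i).1)
    (by
      intro a ha
      simp only [Set.mem_iUnion] at ha
      obtain ⟨i, _, h⟩ := ha
      exact hCI _ h)
    ((range m).isCompact_biUnion fun i _ => hCc _) L ((1/2)^m) (by positivity)
  choose U L' h1 h2 h3 h4 h5 using hstep
  let Ls : ℕ → ℕ := fun m => Nat.rec 0 (fun m L => L' m L) m
  have hLs : ∀ m, Ls (m+1) = L' m (Ls m) := fun m => rfl
  refine ⟨task, Ls, fun m => U m (Ls m), ?_, rfl, ?_, ?_, ?_, ?_, ?_⟩
  · intro t M
    choose g hg using fun k : ℕ => hf (t, k)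
    have ginj : Function.Injective g := by
      intro a b hab
      have := (hg a).symm.trans ((congrArg f hab).trans (hg b))
      simpa using this
    have hinf : {m | task m = t}.Infinite :=
      Set.infinite_of_injective_forall_mem ginj fun k => by simp [htask, hg k]
    obtain ⟨m, hm, hM⟩ := hinf.exists_gt M
    exact ⟨m, hM, hm⟩
  · intro m; rw [hLs]; exact h1 m _
  · intro m i N hN; rw [hLs] at hN; exact h2 m _ i N hN
  · intro m i; exact h3 m _ i
  · intro m m' hmm n hn i a ha
    refine h4 m' _ n hn i a ?_
    simp only [Set.mem_iUnion]
    exact ⟨m, by simpa using hmm, ha⟩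
  · intro m lam hlam
    rw [hLs]
    exact h5 m _ lam hlam

/-- the assembled sequence -/
def xfun (u : ℕ → ℕ → ℂ) (N : ℕ) : ℂ := (if N = 0 then 1 else 0) + ∑ m ∈ range N, u m N

lemma xfun_zero (u : ℕ → ℕ → ℂ) : xfun u 0 = 1 := by simp [xfun]

lemma le_Ls {Ls : ℕ → ℕ} (hL : ∀ m, Ls m < Ls (m+1)) (m : ℕ) : m ≤ Ls m := by
  exact (strictMono_nat_of_lt_succ hL).le_apply

lemma block_exists {Ls : ℕ → ℕ} (hL : ∀ m, Ls m < Ls (m+1)) (m N : ℕ) (h : Ls m < N) :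
    ∃ k, Ls (m+k) < N ∧ N ≤ Ls (m+k+1) := by
  classical
  have hex : ∃ k, N ≤ Ls (m+k+1) := ⟨N, by have := le_Ls hL (m+N+1); omega⟩
  refine ⟨Nat.find hex, ?_, Nat.find_spec hex⟩
  rcases Nat.eq_zero_or_pos (Nat.find hex) with h0 | h0
  · rw [h0]; simpa using h
  · have := Nat.find_min hex (m := Nat.find hex - 1) (by omega)
    have e : m + (Nat.find hex - 1) + 1 = m + Nat.find hex := by omega
    rw [e] at this
    omega

lemma xfun_eq {Ls : ℕ → ℕ} (hL : ∀ m, Ls m < Ls (m+1)) {u : ℕ → ℕ → ℂ}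
    (hu : ∀ m N, (N ≤ Ls m ∨ Ls (m+1) < N) → u m N = 0) (m N : ℕ) (h1 : Ls m < N)
    (h2 : N ≤ Ls (m+1)) : xfun u N = u m N := by
  have hmono := strictMono_nat_of_lt_succ hL
  have hm := le_Ls hL m
  rw [xfun, if_neg (by omega), zero_add]
  apply Finset.sum_eq_single
  · intro k _ hk
    apply hu
    rcases lt_or_gt_of_ne hk with h | h
    · right
      have : Ls (k+1) ≤ Ls m := hmono.monotone h
      omega
    · left
      have : Ls (m+1) ≤ Ls k := hmono.monotone h
      omega
  · intro h; simp only [mem_range] at h; omega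

lemma u_enorm_le {u : ℕ → ℕ → ℂ} (hs : ∀ m, ∑' N, ‖u m N‖ₑ ≤ ENNReal.ofReal ((1/2)^m)) (m N : ℕ) :
    ‖u m N‖ ≤ (1/2)^m := by
  have h := (ENNReal.le_tsum (f := fun N => ‖u m N‖ₑ) N).trans (hs m)
  rw [← ofReal_norm] at h
  exact (ENNReal.ofReal_le_ofReal_iff (by positivity)).mp h

lemma geo_sum (m : ℕ) : ∑' k : ℕ, ENNReal.ofReal ((1/2)^(m+k)) = ENNReal.ofReal ((1/2)^m) * 2 := by
  have : ∀ k : ℕ, ENNReal.ofReal ((1/2)^(m+k)) = ENNReal.ofReal ((1/2)^m) * (2⁻¹)^k := by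
    intro k
    rw [pow_add, ENNReal.ofReal_mul (by positivity)]
    congr 1
    rw [ENNReal.ofReal_pow (by positivity)]
    congr 1
    rw [one_div, ENNReal.ofReal_inv_of_pos (by norm_num)]
    simp
  simp_rw [this]
  rw [ENNReal.tsum_mul_left, ENNReal.tsum_geometric, ENNReal.one_sub_inv_two, inv_inv]

lemma xfun_le_one {Ls : ℕ → ℕ} (hL0 : Ls 0 = 0) (hL : ∀ m, Ls m < Ls (m+1)) {u : ℕ → ℕ → ℂ}
    (hu : ∀ m N, (N ≤ Ls m ∨ Ls (m+1) < N) → u m N = 0)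
    (hs : ∀ m, ∑' N, ‖u m N‖ₑ ≤ ENNReal.ofReal ((1/2)^m)) (N : ℕ) : ‖xfun u N‖ ≤ 1 := by
  rcases Nat.eq_zero_or_pos N with h | h
  · subst h; simp [xfun]
  · obtain ⟨k, h1, h2⟩ := block_exists hL 0 N (by omega)
    rw [xfun_eq hL hu _ N h1 h2]
    exact (u_enorm_le hs _ _).trans (pow_le_one₀ (by norm_num) (by norm_num))

lemma xfun_sum {u : ℕ → ℕ → ℂ}
    (hs : ∀ m, ∑' N, ‖u m N‖ₑ ≤ ENNReal.ofReal ((1/2)^m)) : ∑' N, ‖xfun u N‖ₑ ≠ ⊤ := by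
  have h : ∑' N, ‖xfun u N‖ₑ ≤ ∑' N, ((if N = 0 then 1 else 0) + ∑' m, ‖u m N‖ₑ) := by
    refine ENNReal.tsum_le_tsum fun N => ?_
    refine (enorm_add_le _ _).trans (add_le_add ?_ ?_)
    · split_ifs <;> simp
    · exact (enorm_sum_le _ _).trans (ENNReal.sum_le_tsum _)
  refine ne_top_of_le_ne_top ?_ h
  rw [ENNReal.tsum_add, ENNReal.tsum_comm, tsum_ite_eq]
  have : ∑' m, ∑' N, ‖u m N‖ₑ ≤ ∑' m, ENNReal.ofReal ((1/2)^(0+m)) :=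
    ENNReal.tsum_le_tsum fun m => by simpa using hs m
  rw [geo_sum] at this
  exact ENNReal.add_ne_top.mpr ⟨by simp, ne_top_of_le_ne_top (by finiteness) this⟩

lemma poly_lin {P : Polynomial ℂ} {r : ℕ} {a : ℂ} {B : ℝ} (hr : 1 ≤ r) (hB : 0 ≤ B)
    (h : ∀ z : ℂ, ‖z‖ ≤ 1 → ‖P.eval z - a * z ^ r‖ ≤ B * ‖z‖ ^ (r+1)) (z : ℂ) (hz : ‖z‖ ≤ 1) :
    ‖P.eval z‖ ≤ (‖a‖ + B) * ‖z‖ := by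
  have h1 := h z hz
  have h2 : ‖P.eval z‖ ≤ ‖P.eval z - a * z ^ r‖ + ‖a * z ^ r‖ := by
    simpa using norm_add_le (P.eval z - a * z ^ r) (a * z ^ r)
  have h3 : ‖z‖ ^ r ≤ ‖z‖ := pow_le_of_le_one (norm_nonneg _) hz (by omega)
  have h4 : ‖z‖ ^ (r+1) ≤ ‖z‖ := pow_le_of_le_one (norm_nonneg _) hz (by omega)
  rw [norm_mul, norm_pow] at h2
  have h5 := mul_le_mul_of_nonneg_left h3 (norm_nonneg a)
  have h6 := mul_le_mul_of_nonneg_left h4 hB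
  linarith

lemma poly_l1 (P : Polynomial ℂ) (h0 : P.coeff 0 = 0) (x : ℕ → ℂ) (hx : ∀ n, ‖x n‖ ≤ 1)
    (hs : ∑' n, ‖x n‖ₑ ≠ ⊤) : ∑' n, ‖P.eval (x n)‖ₑ ≠ ⊤ := by
  by_cases hP : P = 0
  · simp [hP]
  obtain ⟨r, a, B, hr, ha, hB, h⟩ := poly_aux P hP h0
  have : ∑' n, ‖P.eval (x n)‖ₑ ≤ ∑' n, ENNReal.ofReal (‖a‖ + B) * ‖x n‖ₑ := by
    refine ENNReal.tsum_le_tsum fun n => ?_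
    rw [← ofReal_norm, ← ofReal_norm, ← ENNReal.ofReal_mul (by positivity)]
    apply ENNReal.ofReal_le_ofReal
    exact poly_lin hr hB h _ (hx n)
  rw [ENNReal.tsum_mul_left] at this
  exact ne_top_of_le_ne_top (ENNReal.mul_ne_top (by finiteness) hs) this

lemma coord_est {P : Polynomial ℂ} {r : ℕ} {a : ℂ} {B : ℝ} (h0 : P.coeff 0 = 0) (hr : 1 ≤ r)
    (hB : 0 ≤ B)
    (h : ∀ z : ℂ, ‖z‖ ≤ 1 → ‖P.eval z - a * z ^ r‖ ≤ B * ‖z‖ ^ (r+1))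
    {Ls : ℕ → ℕ} (hL : ∀ m, Ls m < Ls (m+1)) {u : ℕ → ℕ → ℂ}
    (hu : ∀ m N, (N ≤ Ls m ∨ Ls (m+1) < N) → u m N = 0)
    (hs : ∀ m, ∑' N, ‖u m N‖ₑ ≤ ENNReal.ofReal ((1/2)^m))
    (m n : ℕ) (hn : Ls m < n) (W : ℕ → ℝ) (hW : ∀ j, 0 ≤ W j) (y : ℕ → ℂ)
    (hd : ∀ m', m < m' →
      ∑' j, ENNReal.ofReal (W j) * ‖u m' (j+n)‖ₑ ≤ ENNReal.ofReal ((1/2)^m'))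
    (hy : ∑' j, ‖(W j : ℂ) * u m (j+n)^r - y j‖ₑ ≤ ENNReal.ofReal ((1/2)^m)) :
    ∑' j, ‖(W j : ℂ) * P.eval (xfun u (j+n)) - a * y j‖ₑ ≤
      ENNReal.ofReal ((1/2)^m) *
       (ENNReal.ofReal (‖a‖+B) + ENNReal.ofReal B * ∑' j, ‖y j‖ₑ + ENNReal.ofReal (‖a‖+B) * 2) := by
  have hP0 : P.eval 0 = 0 := by rw [← Polynomial.coeff_zero_eq_eval_zero, h0]
  have hle1 : ∀ k : ℕ, ((1:ℝ)/2)^k ≤ 1 := fun k => pow_le_one₀ (by norm_num) (by norm_num)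
  have hfirst : ∀ j, ‖(W j : ℂ) * P.eval (u m (j+n)) - a * y j‖ₑ ≤
      ENNReal.ofReal (‖a‖+B) * ‖(W j : ℂ) * u m (j+n)^r - y j‖ₑ
       + ENNReal.ofReal (B * (1/2)^m) * ‖y j‖ₑ := by
    intro j
    rw [← ofReal_norm, ← ofReal_norm, ← ofReal_norm, ← ENNReal.ofReal_mul (by positivity),
      ← ENNReal.ofReal_mul (by positivity), ← ENNReal.ofReal_add (by positivity) (by positivity)]
    apply ENNReal.ofReal_le_ofReal
    set z := u m (j+n)
    have hz : ‖z‖ ≤ (1/2)^m := u_enorm_le hs m _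
    have hz1 := hz.trans (hle1 m)
    have e : (W j : ℂ) * P.eval z - a * y j
        = a * ((W j : ℂ) * z^r - y j) + W j * (P.eval z - a * z^r) := by ring
    have e2 : W j * ‖z‖^r = ‖(W j : ℂ) * z^r‖ := by
      rw [norm_mul, norm_pow, Complex.norm_real, Real.norm_of_nonneg (hW j)]
    have e3 : ‖(W j : ℂ) * z^r‖ ≤ ‖(W j : ℂ) * z^r - y j‖ + ‖y j‖ := by
      simpa using norm_add_le ((W j : ℂ) * z^r - y j) (y j)
    have e4 : W j * ‖P.eval z - a * z^r‖ ≤ B * ((1/2)^m * (‖(W j : ℂ) * z^r - y j‖ + ‖y j‖)) := by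
      calc W j * ‖P.eval z - a * z^r‖ ≤ W j * (B * ‖z‖^(r+1)) :=
            mul_le_mul_of_nonneg_left (h z hz1) (hW j)
        _ = B * (‖z‖ * (W j * ‖z‖^r)) := by ring
        _ ≤ _ := by
            rw [e2]
            gcongr
    rw [e]
    refine (norm_add_le _ _).trans ?_
    rw [norm_mul, norm_mul, Complex.norm_real, Real.norm_of_nonneg (hW j)]
    have e5 : B * ((1/2)^m * ‖(W j : ℂ) * z^r - y j‖) ≤ B * (1 * ‖(W j : ℂ) * z^r - y j‖) := by
      gcongr
      exact hle1 m
    nlinarith [e4, e5]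
  have hpt : ∀ j, ‖(W j : ℂ) * P.eval (xfun u (j+n)) - a * y j‖ₑ ≤
      ‖(W j : ℂ) * P.eval (u m (j+n)) - a * y j‖ₑ +
       ENNReal.ofReal (‖a‖+B) * ∑' k, ENNReal.ofReal (W j) * ‖u (m+1+k) (j+n)‖ₑ := by
    intro j
    obtain ⟨k, hk1, hk2⟩ := block_exists hL m (j+n) (by omega)
    rw [xfun_eq hL hu _ _ hk1 hk2]
    rcases k with _ | k
    · exact le_self_add
    · have hz : u m (j+n) = 0 := by
        apply hu
        right
        have : Ls (m+1) ≤ Ls (m+(k+1)) :=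
          (strictMono_nat_of_lt_succ hL).monotone (by omega)
        omega
      rw [hz, hP0, mul_zero, zero_sub, enorm_neg]
      refine (enorm_sub_le).trans ((add_comm _ _).le.trans (add_le_add le_rfl ?_))
      have hk : m + (k+1) = m+1+k := by omega
      rw [hk]
      refine le_trans ?_ (mul_le_mul_right (ENNReal.le_tsum k) _)
      rw [← ofReal_norm, ← ofReal_norm, ← ENNReal.ofReal_mul (hW j),
        ← ENNReal.ofReal_mul (by positivity)]
      apply ENNReal.ofReal_le_ofReal
      rw [norm_mul, Complex.norm_real, Real.norm_of_nonneg (hW j)]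
      have := poly_lin hr hB h (u (m+1+k) (j+n)) ((u_enorm_le hs _ _).trans (hle1 _))
      calc _ ≤ W j * ((‖a‖+B) * ‖u (m+1+k) (j+n)‖) := mul_le_mul_of_nonneg_left this (hW j)
        _ = _ := by ring
  calc _ ≤ ∑' j, ((ENNReal.ofReal (‖a‖+B) * ‖(W j : ℂ) * u m (j+n)^r - y j‖ₑ
       + ENNReal.ofReal (B * (1/2)^m) * ‖y j‖ₑ) +
         ENNReal.ofReal (‖a‖+B) * ∑' k, ENNReal.ofReal (W j) * ‖u (m+1+k) (j+n)‖ₑ) :=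
        ENNReal.tsum_le_tsum fun j => (hpt j).trans (add_le_add (hfirst j) le_rfl)
    _ = ENNReal.ofReal (‖a‖+B) * ∑' j, ‖(W j : ℂ) * u m (j+n)^r - y j‖ₑ
       + ENNReal.ofReal (B * (1/2)^m) * ∑' j, ‖y j‖ₑ +
         ENNReal.ofReal (‖a‖+B) * ∑' k, ∑' j, ENNReal.ofReal (W j) * ‖u (m+1+k) (j+n)‖ₑ := by
        rw [ENNReal.tsum_add, ENNReal.tsum_add, ENNReal.tsum_mul_left, ENNReal.tsum_mul_left,
          ENNReal.tsum_mul_left]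
        congr 2
        exact ENNReal.tsum_comm
    _ ≤ ENNReal.ofReal (‖a‖+B) * ENNReal.ofReal ((1/2)^m)
       + ENNReal.ofReal (B * (1/2)^m) * ∑' j, ‖y j‖ₑ +
         ENNReal.ofReal (‖a‖+B) * (ENNReal.ofReal ((1/2)^m) * 2) := by
        refine add_le_add (add_le_add (mul_le_mul_right hy _) le_rfl) (mul_le_mul_right ?_ _)
        rw [← geo_sum]
        refine ENNReal.tsum_le_tsum fun k => (hd _ (by omega)).trans ?_
        apply ENNReal.ofReal_le_ofReal
        exact pow_le_pow_of_le_one (by norm_num) (by norm_num) (by omega)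
    _ = _ := by
        rw [ENNReal.ofReal_mul hB]
        ring

/-- Corollary 1.2 of the paper (case `X = ℓᵖ(ℕ)`). -/
theorem stmt_2 (d : ℕ) (hd : 1 ≤ d) (p : ℝ≥0∞) [Fact (1 ≤ p)] (hp : p ≠ ⊤)
    (I : Set ℝ) (hIpos : ∀ a ∈ I, 0 < a) (hIσ : IsSigmaCompact I)
    (w : ℝ → ℕ → ℝ)
    (hwpos : ∀ a ∈ I, ∀ n : ℕ, 1 ≤ n → 0 < w a n)
    (hwbdd : ∀ a ∈ I, ∃ C : ℝ, ∀ n : ℕ, 1 ≤ n → w a n ≤ C)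
    (hwcont : ∀ n : ℕ, ContinuousOn (fun a => w a n) I)
    (hcrit : ∀ I₀ ⊆ I, IsCompact I₀ →
      ∃ D₁ > (0 : ℝ), ∃ D₂ > (0 : ℝ), ∃ γ > (0 : ℝ), ∃ N : ℕ, ∀ n : ℕ, N ≤ n →
        (∀ a ∈ I₀, ∀ b ∈ I₀,
          |(∑ i ∈ Finset.Icc 1 n, Real.log (w a i)) -
              ∑ i ∈ Finset.Icc 1 n, Real.log (w b i)| ≤ D₁ * Real.log n * |a - b|) ∧
        (∀ a ∈ I₀, D₂ * (n : ℝ) ^ γ ≤ ∏ i ∈ Finset.Icc 1 n, w a i))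
    (T : (Fin d → ℝ) → ((Fin d → lpC p) →L[ℂ] (Fin d → lpC p)))
    (hT : ∀ lam : Fin d → ℝ, (∀ i, lam i ∈ I) → IsProductShift p d w (T lam) lam) :
    CommonHypercyclicAlgebraCW p d {lam | ∀ i, lam i ∈ I} T := by
  have hcrit' : ∀ I₀ ⊆ I, IsCompact I₀ →
      ∃ D₁ > (0 : ℝ), ∃ D₂ > (0 : ℝ), ∃ γ > (0 : ℝ), ∃ N : ℕ, ∀ n : ℕ, N ≤ n →
        (∀ a ∈ I₀, ∀ b ∈ I₀,
          |Real.log (Mw w a n) - Real.log (Mw w b n)| ≤ D₁ * Real.log n * |a - b|) ∧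
        (∀ a ∈ I₀, D₂ * (n : ℝ) ^ γ ≤ Mw w a n) := by
    intro I₀ hI₀ hc
    obtain ⟨D₁, h1, D₂, h2, γ, hγ, N, h⟩ := hcrit I₀ hI₀ hc
    refine ⟨D₁, h1, D₂, h2, γ, hγ, N, fun n hn => ⟨fun a ha b hb => ?_, fun a ha => ?_⟩⟩
    · rw [log_Mw hwpos (hI₀ ha), log_Mw hwpos (hI₀ hb)]
      exact (h n hn).1 a ha b hb
    · exact (h n hn).2 a ha
  obtain ⟨K, hKc, hKI⟩ := hIσ
  let C : ℕ → Set ℝ := fun k => ⋃ i ∈ range (k+1), K i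
  have hCI : ∀ k, C k ⊆ I := by
    intro k a ha
    simp only [C, Set.mem_iUnion] at ha
    obtain ⟨i, _, h⟩ := ha
    rw [← hKI]
    exact Set.mem_iUnion.mpr ⟨i, h⟩
  have hCc : ∀ k, IsCompact (C k) := fun k => (range (k+1)).isCompact_biUnion fun i _ => hKc i
  have hmem : ∀ a ∈ I, ∃ k, ∀ k', k ≤ k' → a ∈ C k' := by
    intro a ha
    rw [← hKI] at ha
    obtain ⟨k, hk⟩ := Set.mem_iUnion.mp ha
    refine ⟨k, fun k' hk' => ?_⟩
    simp only [C, Set.mem_iUnion]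
    exact ⟨k, by simp; omega, hk⟩
  choose ε₀ hε₀ hkey using fun k =>
    key_stage d hd hwpos hwbdd hwcont hcrit' (C k) (hCI k) (hCc k)
  obtain ⟨task, Ls, u, htask, hL0, hL, hu, hs, hdd, hhit⟩ :=
    build_stages (I := I) (w := w) d C ε₀ hCI hCc hkey
  have hu' : ∀ i, ∀ m N, (N ≤ Ls m ∨ Ls (m+1) < N) → u m i N = 0 := fun i m N h => hu m i N h
  have hs' : ∀ i, ∀ m, ∑' N, ‖u m i N‖ₑ ≤ ENNReal.ofReal ((1/2)^m) := fun i m => hs m i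
  let x : Fin d → ℕ → ℂ := fun i => xfun (fun m => u m i)
  have hx1 : ∀ i N, ‖x i N‖ ≤ 1 := fun i N => xfun_le_one hL0 hL (hu' i) (hs' i) N
  have hxs : ∀ i, ∑' N, ‖x i N‖ₑ ≠ ⊤ := fun i => xfun_sum (hs' i)
  have hex : ∀ P : Polynomial ℂ, P.coeff 0 = 0 →
      ∃ v : Fin d → lpC p, ∀ i n, v i n = P.eval (x i n) := fun P hP =>
    ⟨fun i => ⟨fun n => P.eval (x i n),
      memlp_of_l1 p _ (poly_l1 P hP (x i) (hx1 i) (hxs i))⟩, fun i n => rfl⟩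
  refine ⟨{v | ∃ P : Polynomial ℂ, P.coeff 0 = 0 ∧ ∀ i n, v i n = P.eval (x i n)},
    ?_, ?_, ?_, ?_, ?_, ?_⟩
  · exact ⟨0, by simp, fun i n => by simp⟩
  · rintro v ⟨P, hP, hv⟩ v' ⟨P', hP', hv'⟩
    refine ⟨P + P', by simp [hP, hP'], fun i n => ?_⟩
    simp [hv, hv']
  · rintro c v ⟨P, hP, hv⟩
    refine ⟨Polynomial.C c * P, by simp [hP], fun i n => ?_⟩
    simp [hv]
  · rintro v ⟨P, hP, hv⟩ v' ⟨P', hP', hv'⟩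
    obtain ⟨z, hz⟩ := hex (P * P') (by simp [Polynomial.mul_coeff_zero, hP])
    refine ⟨z, ⟨P * P', by simp [Polynomial.mul_coeff_zero, hP], hz⟩, fun i n => ?_⟩
    rw [hz, hv, hv', Polynomial.eval_mul]
  · obtain ⟨z, hz⟩ := hex Polynomial.X (by simp)
    refine ⟨z, ⟨Polynomial.X, by simp, hz⟩, fun h => ?_⟩
    have h1 := hz ⟨0, hd⟩ 0
    rw [h] at h1
    simp [x, xfun_zero] at h1
  · rintro v ⟨P, hP, hv⟩ hv0 lam hlam
    have hlamI : ∀ i, lam i ∈ I := hlam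
    have hPne : P ≠ 0 := by
      rintro rfl
      apply hv0
      ext i n
      simp [hv]
    obtain ⟨r, a, B, hr, ha, hB, hpoly⟩ := poly_aux P hPne hP
    rw [Metric.dense_iff]
    intro v₀ δ hδ
    have hna : 0 < ‖a‖ := norm_pos_iff.mpr ha
    obtain ⟨t, yL, hyL, hyd⟩ := dense_aux p hp d (a⁻¹ • v₀) (δ / (2 * ‖a‖)) (by positivity)
    -- the piece and the centre
    choose kk hkk using fun i => hmem (lam i) (hlamI i)
    let k := univ.sup kk
    have hk : ∀ i, lam i ∈ C k := fun i => hkk i k (Finset.le_sup (mem_univ i))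
    have hc : ∀ i, ∃ q : ℚ, |lam i - q| < ε₀ k := by
      intro i
      obtain ⟨q, hq⟩ := Rat.denseRange_cast.exists_dist_lt (lam i) (hε₀ k)
      exact ⟨q, by rwa [Real.dist_eq] at hq⟩
    choose c hc using hc
    -- the constant
    set Kc : ℝ≥0∞ := ENNReal.ofReal (‖a‖+B) +
      ENNReal.ofReal B * (∑ i, ∑' j, ‖yfun d t i j‖ₑ) + ENNReal.ofReal (‖a‖+B) * 2 with hKc'
    have hYt : (∑ i, ∑' j, ‖yfun d t i j‖ₑ) ≠ ⊤ :=
      ENNReal.sum_ne_top.mpr fun i _ => yfun_sum_lt d t i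
    have hKt : Kc ≠ ⊤ := by
      have : ENNReal.ofReal B * (∑ i, ∑' j, ‖yfun d t i j‖ₑ) ≠ ⊤ :=
        ENNReal.mul_ne_top ENNReal.ofReal_ne_top hYt
      rw [hKc']
      finiteness
    obtain ⟨M, hM⟩ := exists_pow_lt_of_lt_one (x := δ / 2 / (Kc.toReal + 1)) (y := (1:ℝ)/2)
      (by positivity) (by norm_num)
    obtain ⟨m, hMm, htm⟩ := htask (k, c, r-1, t) M
    have hsmall : ENNReal.ofReal ((1/2)^m) * Kc < ENNReal.ofReal (δ/2) := by
      rw [← ENNReal.ofReal_toReal hKt, ← ENNReal.ofReal_mul (by positivity)]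
      apply (ENNReal.ofReal_lt_ofReal_iff (by positivity)).mpr
      have h1 : ((1:ℝ)/2)^m ≤ (1/2)^M :=
        pow_le_pow_of_le_one (by norm_num) (by norm_num) hMm.le
      have h0 : 0 ≤ Kc.toReal := ENNReal.toReal_nonneg
      calc ((1:ℝ)/2)^m * Kc.toReal ≤ (1/2)^M * (Kc.toReal + 1) := by gcongr; linarith
        _ < δ / 2 / (Kc.toReal + 1) * (Kc.toReal + 1) := by gcongr
        _ = δ / 2 := by field_simp
    obtain ⟨n, hn1, hn2, hn3⟩ := hhit m lam (by
      intro i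
      rw [htm]
      exact ⟨hk i, (hc i).le⟩)
    rw [htm] at hn3
    simp only [Nat.sub_add_cancel hr] at hn3
    have hest : ∀ i, ‖((T lam)^n) v i - a • yL i‖ < δ / 2 := by
      intro i
      have hce := coord_est (P := P) (a := a) hP hr hB hpoly hL (hu' i) (hs' i) m n hn1
        (fun j => Ww w (lam i) n j)
        (fun j => (Ww_pos hwpos (hlamI i) n j).le) (yfun d t i)
        (fun m' hm' => hdd m m' hm' n
          (hn2.trans ((strictMono_nat_of_lt_succ hL).monotone hm')) i (lam i)
          (by rw [htm]; exact hk i))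
        (hn3 i)
      have h1 : ‖((T lam)^n) v i - a • yL i‖ₑ < ENNReal.ofReal (δ/2) := by
        refine lt_of_le_of_lt ?_ hsmall
        refine (lp_enorm_le p hp _).trans ?_
        refine le_trans (le_of_eq ?_) (hce.trans ?_)
        · refine tsum_congr fun j => ?_
          congr 1
          have e1 : (((T lam)^n) v i - a • yL i) j = ((T lam)^n) v i j - a * yL i j := rfl
          rw [e1, pow_shift (hT lam hlamI), hv, hyL]
        · rw [hKc']
          gcongr
          exact Finset.single_le_sum (f := fun i => ∑' j, ‖yfun d t i j‖ₑ)
            (fun _ _ => zero_le) (mem_univ i)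
      rw [← ofReal_norm] at h1
      exact (ENNReal.ofReal_lt_ofReal_iff (by positivity)).mp h1
    refine ⟨((T lam)^n) v, ?_, n - 1, ?_⟩
    · rw [Metric.mem_ball, dist_pi_lt_iff hδ]
      intro i
      rw [dist_eq_norm]
      have h2 : ‖a • yL i - v₀ i‖ < δ / 2 := by
        have e : a • yL i - v₀ i = a • (yL i - (a⁻¹ • v₀) i) := by
          rw [smul_sub, Pi.smul_apply, smul_inv_smul₀ ha]
        rw [e, norm_smul]
        calc ‖a‖ * _ < ‖a‖ * (δ / (2 * ‖a‖)) := mul_lt_mul_of_pos_left (hyd i) hna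
          _ = δ / 2 := by field_simp
      calc _ = ‖(((T lam)^n) v i - a • yL i) + (a • yL i - v₀ i)‖ := by congr 1; abel
        _ ≤ _ := norm_add_le _ _
        _ < δ := by linarith [hest i]
    · have : n - 1 + 1 = n := by omega
      simp only [this]
end
end

section
/- Let d ≥ 1 be an integer and let I ⊂ (0,∞) be σ-compact. Let (w(λ))_{λ∈I} be a continuous family of bounded positive weight sequences. Assume that for every compact I₀ ⊂ I there exist D₁, D₂, γ > 0 and an integer N ≥ 0 such that for all n ≥ N: (1) the map a ↦ Σ_{i=1}^n log(w_i(a)) is D₁·log(n)-Lipschitz on I₀; and (2) inf_{a∈I₀} w_1(a)⋯w_n(a) ≥ D₂·n^γ. Then the family (B_{w(λ₁)} × ⋯ × B_{w(λ_d)})_{λ∈I^d} admits a common hypercyclic algebra on c₀(ℕ)^d for the coordinatewise product. -/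
open scoped ENNReal ZeroAtInfty
open Finset

noncomputable section

/-- The space `c₀(ℕ)` of complex sequences vanishing at infinity, with the sup norm. -/
abbrev c0C : Type := C₀(ℕ, ℂ)

/-- `T` is the product operator `B_{w(lam 0)} × ⋯ × B_{w(lam (d-1))}` of weighted backward
shifts, the weight sequence of the `i`-th factor being `(w (lam i) n)_{n ≥ 1}`. -/
def IsProductShiftC0 (d : ℕ) (w : ℝ → ℕ → ℝ)
    (T : (Fin d → c0C) →L[ℂ] (Fin d → c0C)) (lam : Fin d → ℝ) : Prop :=
  ∀ (v : Fin d → c0C) (i : Fin d) (n : ℕ),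
    (T v) i n = (w (lam i) (n + 1) : ℂ) * v i (n + 1)

/-- The family `T lam`, `lam ∈ S`, admits a common hypercyclic algebra for the coordinatewise
product: there is a non-unital subalgebra `A ≠ {0}` of `(c₀(ℕ))^d` (closed under addition,
scalar multiplication and the componentwise coordinatewise product) every nonzero element of
which is a common hypercyclic vector for the family. -/
def CommonHypercyclicAlgebraCWC0 (d : ℕ) (S : Set (Fin d → ℝ))
    (T : (Fin d → ℝ) → ((Fin d → c0C) →L[ℂ] (Fin d → c0C))) : Prop :=
  ∃ A : Set (Fin d → c0C),
    (0 : Fin d → c0C) ∈ A ∧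
    (∀ x ∈ A, ∀ y ∈ A, x + y ∈ A) ∧
    (∀ (c : ℂ), ∀ x ∈ A, c • x ∈ A) ∧
    (∀ x ∈ A, ∀ y ∈ A, ∃ z ∈ A, ∀ (i : Fin d) (n : ℕ), z i n = x i n * y i n) ∧
    (∃ x ∈ A, x ≠ 0) ∧
    (∀ x ∈ A, x ≠ 0 → ∀ lam ∈ S, Dense (Set.range fun n : ℕ => ((T lam) ^ (n + 1)) x))

lemma cover_aux_s3 (S : Set ℝ) (hne : S.Nonempty) (α : ℝ) (hS : S ⊆ Set.Icc α (α+1)) (Q : ℕ) (hQ : 1 ≤ Q) :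
    ∃ rep : Fin (Q+1) → ℝ, (∀ k, rep k ∈ S) ∧ ∀ a ∈ S, ∃ k, |a - rep k| ≤ 1 / (Q:ℝ) := by
  classical
  have hQ0 : (0:ℝ) < Q := by exact_mod_cast hQ
  have key : ∀ k : Fin (Q+1), ∃ b ∈ S, ∀ a ∈ S, ⌊(a-α)*Q⌋₊ = (k:ℕ) → |a - b| ≤ 1/(Q:ℝ) := by
    intro k
    by_cases h : ∃ b ∈ S, ⌊(b-α)*Q⌋₊ = (k:ℕ)
    · obtain ⟨b, hb, hbk⟩ := h
      refine ⟨b, hb, fun a ha hak => ?_⟩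
      have ha0 : 0 ≤ (a-α)*Q := mul_nonneg (by linarith [(hS ha).1]) hQ0.le
      have hb0 : 0 ≤ (b-α)*Q := mul_nonneg (by linarith [(hS hb).1]) hQ0.le
      rw [Nat.floor_eq_iff ha0] at hak
      rw [Nat.floor_eq_iff hb0] at hbk
      rw [le_div_iff₀ hQ0, ← abs_of_pos hQ0, ← abs_mul, abs_le]
      constructor <;> nlinarith
    · obtain ⟨b, hb⟩ := hne
      exact ⟨b, hb, fun a ha hak => (h ⟨a, ha, hak⟩).elim⟩
  choose rep h1 h2 using key
  refine ⟨rep, h1, fun a ha => ?_⟩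
  have hlt : ⌊(a-α)*Q⌋₊ < Q+1 := by
    rw [Nat.lt_succ_iff]
    apply Nat.floor_le_of_le
    nlinarith [(hS ha).2]
  exact ⟨⟨_, hlt⟩, h2 _ a ha rfl⟩

lemma cover_pi (d : ℕ) (S : Fin d → Set ℝ) (hne : ∀ i, (S i).Nonempty) (α : Fin d → ℝ)
    (hS : ∀ i, S i ⊆ Set.Icc (α i) (α i + 1)) (Q : ℕ) (hQ : 1 ≤ Q) :
    ∃ r : ℕ → Fin d → ℝ, (∀ j i, r j i ∈ S i) ∧
      ∀ lam : Fin d → ℝ, (∀ i, lam i ∈ S i) → ∃ k < (Q+1)^d, ∀ i, |lam i - r k i| ≤ 1 / (Q:ℝ) := by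
  choose rep h1 h2 using fun i => cover_aux_s3 (S i) (hne i) (α i) (hS i) Q hQ
  choose s hs using hne
  refine ⟨fun j i => if h : j < (Q+1)^d then rep i (finFunctionFinEquiv.symm ⟨j, h⟩ i) else s i, ?_, ?_⟩
  · intro j i
    dsimp only
    split_ifs
    · exact h1 _ _
    · exact hs i
  · intro lam hl
    choose k hk using fun i => h2 i (lam i) (hl i)
    refine ⟨finFunctionFinEquiv k, (finFunctionFinEquiv k).2, fun i => ?_⟩
    simp only [Fin.is_lt, dif_pos, Fin.eta, Equiv.symm_apply_apply]
    exact hk i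

/-- Choice of `Q`. -/
lemma choose_Q (d : ℕ) (hd : 1 ≤ d) (n0 : ℕ) (D1 γ B1 B2 κ1 κ2 θ δ : ℝ) (hγ : 0 < γ)
    (h1 : 0 < κ1) (h2 : 0 < κ2) (hθ : 0 < θ) (hδ : 0 < δ) :
    ∃ Q n : ℕ, 1 ≤ Q ∧ n = (Q+1)^d ∧ n0 ≤ n ∧ B1 * (n:ℝ)^(-γ) ≤ κ1 ∧ B2 * (n:ℝ)^(-(γ/4)) ≤ κ2 ∧
      D1 * (3 * Real.log n) * (1/(Q:ℝ)) ≤ θ ∧ 1/(Q:ℝ) < δ := by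
  have hn : Filter.Tendsto (fun Q : ℕ => (Q+1)^d) Filter.atTop Filter.atTop :=
    (Filter.tendsto_pow_atTop (by omega)).comp (Filter.tendsto_add_atTop_nat 1)
  have hnR : Filter.Tendsto (fun Q : ℕ => (((Q+1)^d : ℕ) : ℝ)) Filter.atTop Filter.atTop :=
    tendsto_natCast_atTop_atTop.comp hn
  have e1 : Filter.Tendsto (fun Q : ℕ => B1 * (((Q+1)^d : ℕ) : ℝ)^(-γ)) Filter.atTop (nhds 0) := by
    simpa using ((tendsto_rpow_neg_atTop hγ).comp hnR).const_mul B1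
  have e2 : Filter.Tendsto (fun Q : ℕ => B2 * (((Q+1)^d : ℕ) : ℝ)^(-(γ/4))) Filter.atTop (nhds 0) := by
    simpa using ((tendsto_rpow_neg_atTop (by positivity : 0 < γ/4)).comp hnR).const_mul B2
  have e3 : Filter.Tendsto (fun Q : ℕ => 1 / (Q:ℝ)) Filter.atTop (nhds 0) :=
    tendsto_one_div_atTop_nhds_zero_nat
  have e4 : Filter.Tendsto (fun Q : ℕ => D1 * (3 * Real.log (((Q+1)^d : ℕ) : ℝ)) * (1/(Q:ℝ)))
      Filter.atTop (nhds 0) := by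
    have a1 : Filter.Tendsto (fun x : ℝ => Real.log x / (1 * x + (-1))) Filter.atTop (nhds 0) := by
      simpa using Real.tendsto_pow_log_div_mul_add_atTop 1 (-1) 1 one_ne_zero
    have a2 : Filter.Tendsto (fun Q : ℕ => ((Q + 1 : ℕ) : ℝ)) Filter.atTop Filter.atTop :=
      tendsto_natCast_atTop_atTop.comp (Filter.tendsto_add_atTop_nat 1)
    have a3 := (a1.comp a2).const_mul (D1 * 3 * d)
    rw [mul_zero] at a3
    refine a3.congr fun Q => ?_
    simp only [Function.comp, Nat.cast_pow, Real.log_pow]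
    push_cast
    ring
  have ev := ((Filter.eventually_ge_atTop 1).and ((hn.eventually_ge_atTop n0).and
    ((e1.eventually_le_const h1).and ((e2.eventually_le_const h2).and ((e4.eventually_le_const hθ).and
      (e3.eventually_lt_const hδ))))))
  obtain ⟨Q, q1, q2, q3, q4, q5, q6⟩ := ev.exists
  exact ⟨Q, _, q1, rfl, q2, q3, q4, q5, q6⟩

lemma ratio_le (A B t : ℝ) (hA : 0 < A) (hB : 0 < B) (h : |Real.log A - Real.log B| ≤ t) :
    A ≤ B * Real.exp t := by
  have h1 : Real.log A ≤ Real.log B + t := by linarith [(abs_le.1 h).2]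
  calc A = Real.exp (Real.log A) := (Real.exp_log hA).symm
    _ ≤ Real.exp (Real.log B + t) := Real.exp_le_exp.2 h1
    _ = B * Real.exp t := by rw [Real.exp_add, Real.exp_log hB]

/-- far blocks -/
lemma far_est (g : ℂ → ℂ) (m : ℕ) (M' : ℝ) (hM' : 0 ≤ M')
    (hg : ∀ t : ℂ, ‖t‖ ≤ 1 → ‖g t - t^m‖ ≤ M' * ‖t‖^(m+1))
    (c y : ℂ) (hc1 : ‖c‖ ≤ 1) (Wp Wp' Wl' Ws D2 γ n B : ℝ) (hWp : 0 < Wp) (hWp' : 0 < Wp') (hWl' : 0 < Wl')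
    (hD2 : 0 < D2) (hn : 1 ≤ n)
    (hc : c^m = y * ((Wl' / Wp' : ℝ) : ℂ)) (hB : ‖y‖ * Wl' ≤ B)
    (hlog : |Real.log Wp - Real.log Wp'| ≤ (3 * γ / 4) * Real.log n)
    (hs : D2 * n^γ ≤ Ws) :
    ‖((Wp / Ws : ℝ) : ℂ) * g c‖ ≤ (1 + M') * B / D2 * n^(-(γ/4)) := by
  have hn0 : 0 < n := by linarith
  have hnγ : 0 < n^γ := Real.rpow_pos_of_pos hn0 _
  have hWs : 0 < Ws := lt_of_lt_of_le (by positivity) hs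
  have hgc : ‖g c‖ ≤ (1 + M') * ‖c‖^m := by
    have h1 := hg c hc1
    have h2 : ‖g c‖ ≤ ‖g c - c^m‖ + ‖c^m‖ := by
      simpa using norm_add_le (g c - c^m) (c^m)
    rw [norm_pow] at h2
    have h3 : ‖c‖^(m+1) ≤ ‖c‖^m := pow_le_pow_of_le_one (norm_nonneg _) hc1 (by omega)
    nlinarith [mul_le_mul_of_nonneg_left h3 hM']
  have hcm : ‖c‖^m = ‖y‖ * Wl' / Wp' := by
    rw [← norm_pow, hc, norm_mul, Complex.norm_real, Real.norm_of_nonneg (by positivity)]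
    ring
  have hr := ratio_le Wp Wp' _ hWp hWp' hlog
  have hexp : Real.exp ((3 * γ / 4) * Real.log n) = n^(3*γ/4) := by
    rw [Real.rpow_def_of_pos hn0, mul_comm]
  rw [hexp] at hr
  have hB0 : 0 ≤ B := le_trans (by positivity) hB
  rw [norm_mul, Complex.norm_real, Real.norm_of_nonneg (by positivity)]
  calc Wp / Ws * ‖g c‖ ≤ (Wp' * n^(3*γ/4)) / (D2 * n^γ) * ((1+M') * (B / Wp')) := by
        rw [hcm] at hgc
        have : ‖y‖ * Wl' / Wp' ≤ B / Wp' := by gcongr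
        have h3 : ‖g c‖ ≤ (1+M') * (B / Wp') := hgc.trans (by gcongr)
        gcongr
    _ = (1 + M') * B / D2 * (n^(3*γ/4) / n^γ) := by
        field_simp
    _ = _ := by
        rw [← Real.rpow_sub hn0]; congr 2; ring

/-- the near block -/
lemma near_est (g : ℂ → ℂ) (m : ℕ) (M' : ℝ) (hM' : 0 ≤ M')
    (hg : ∀ t : ℂ, ‖t‖ ≤ 1 → ‖g t - t^m‖ ≤ M' * ‖t‖^(m+1))
    (c y : ℂ) (ρ θ Y : ℝ) (hρ : ρ ≤ 1) (hc1 : ‖c‖ ≤ ρ) (hθ : θ ≤ 1/2) (hY : ‖y‖ ≤ Y)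
    (Wp Wp' Wl' Wl : ℝ) (hWp : 0 < Wp) (hWp' : 0 < Wp') (hWl' : 0 < Wl') (hWl : 0 < Wl)
    (hc : c^m = y * ((Wl' / Wp' : ℝ) : ℂ))
    (hlog : |Real.log Wp - Real.log Wp'| ≤ θ) (hlog2 : |Real.log Wl - Real.log Wl'| ≤ θ) :
    ‖((Wp / Wl : ℝ) : ℂ) * g c - y‖ ≤ Y * (4 * θ) + 3 * Y * M' * ρ := by
  set x := (Real.log Wp - Real.log Wp') - (Real.log Wl - Real.log Wl') with hx
  have hx2 : |x| ≤ 2 * θ := by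
    rw [abs_le] at *; constructor <;> linarith [hlog.1, hlog.2, hlog2.1, hlog2.2]
  have hrat : Wp / Wl * (Wl' / Wp') = Real.exp x := by
    rw [hx, Real.exp_sub, Real.exp_sub, Real.exp_sub, Real.exp_log hWp, Real.exp_log hWp', Real.exp_log hWl,
      Real.exp_log hWl']
    field_simp
  have hex : |Real.exp x - 1| ≤ 4 * θ := by
    have := Real.abs_exp_sub_one_le (x := x) (by linarith)
    linarith
  have hV : ((Wp / Wl : ℝ) : ℂ) * c^m = y * ((Real.exp x : ℝ) : ℂ) := by
    rw [hc, ← hrat]; push_cast; ring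
  have hVn : Wp / Wl * ‖c‖^m ≤ 3 * Y := by
    have := congrArg norm hV
    rw [norm_mul, norm_mul, Complex.norm_real, Complex.norm_real, norm_pow,
      Real.norm_of_nonneg (by positivity), Real.norm_of_nonneg (by positivity)] at this
    rw [this]
    have h3 : Real.exp x ≤ 3 := by linarith [(abs_le.1 hex).2]
    nlinarith [norm_nonneg y, Real.exp_pos x]
  have e : ((Wp / Wl : ℝ) : ℂ) * g c - y
      = y * ((Real.exp x - 1 : ℝ) : ℂ) + ((Wp / Wl : ℝ) : ℂ) * (g c - c^m) := by
    rw [mul_sub, hV]; push_cast; ring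
  have hY0 : 0 ≤ Y := (norm_nonneg y).trans hY
  rw [e]
  refine (norm_add_le _ _).trans (add_le_add ?_ ?_)
  · rw [norm_mul, Complex.norm_real, Real.norm_eq_abs]
    gcongr
  · rw [norm_mul, Complex.norm_real, Real.norm_of_nonneg (by positivity)]
    calc Wp / Wl * ‖g c - c^m‖ ≤ Wp / Wl * (M' * ‖c‖^(m+1)) := by
          gcongr; exact hg c (hc1.trans hρ)
      _ = (Wp / Wl * ‖c‖^m) * M' * ‖c‖ := by ring
      _ ≤ 3 * Y * M' * ρ := by gcongr

lemma core (d : ℕ) (hd : 1 ≤ d) (K : Set ℝ) (W : ℝ → ℕ → ℝ)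
    (hWpos : ∀ a ∈ K, ∀ n, 0 < W a n) (D1 D2 γ : ℝ) (hD1 : 0 < D1) (hD2 : 0 < D2) (hγ : 0 < γ) (N : ℕ)
    (H1 : ∀ p, N ≤ p → ∀ a ∈ K, ∀ b ∈ K,
      |Real.log (W a p) - Real.log (W b p)| ≤ D1 * Real.log p * |a - b|)
    (H2 : ∀ p, N ≤ p → ∀ a ∈ K, D2 * (p:ℝ)^γ ≤ W a p)
    (S : Fin d → Set ℝ) (hSK : ∀ i, S i ⊆ K) (hne : ∀ i, (S i).Nonempty) (α : Fin d → ℝ)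
    (hS : ∀ i, S i ⊆ Set.Icc (α i) (α i + 1))
    (hSd : ∀ i, ∀ a ∈ S i, ∀ b ∈ S i, D1 * |a - b| ≤ γ / 4)
    (y u : Fin d → ℕ → ℂ) (L : ℕ) (hy : ∀ i l, L ≤ l → y i l = 0) (hu : ∀ i l, L ≤ l → u i l = 0)
    (B Y : ℝ) (hB : ∀ i l, ∀ a ∈ K, ‖y i l‖ * W a l ≤ B) (hY : ∀ i l, ‖y i l‖ ≤ Y)
    (HU : ∀ θ > 0, ∃ δ > 0, ∀ l < L, ∀ a ∈ K, ∀ b ∈ K, |a - b| < δ →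
      |Real.log (W a l) - Real.log (W b l)| ≤ θ)
    (m : ℕ) (hm : 1 ≤ m) (M' : ℝ) (hM' : 0 ≤ M') (ε η : ℝ) (hε : 0 < ε) (hη : 0 < η) :
    ∃ (x : Fin d → ℕ → ℂ) (L' : ℕ), (∀ i l, L' ≤ l → x i l = 0) ∧ (∀ i l, ‖x i l - u i l‖ ≤ η) ∧
      ∀ lam : Fin d → ℝ, (∀ i, lam i ∈ S i) → ∃ n, 1 ≤ n ∧ n ≤ L' ∧ ∀ g : ℂ → ℂ, g 0 = 0 →
        (∀ t : ℂ, ‖t‖ ≤ 1 → ‖g t - t^m‖ ≤ M' * ‖t‖^(m+1)) →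
        ∀ i s, ‖((W (lam i) (s+n) / W (lam i) s : ℝ) : ℂ) * g (x i (s+n)) - y i s‖ ≤ ε := by
  have hY0 : 0 ≤ Y := (norm_nonneg _).trans (hY ⟨0, hd⟩ 0)
  have hB0 : 0 ≤ B := by
    obtain ⟨a, ha⟩ := hne ⟨0, hd⟩
    exact le_trans (mul_nonneg (norm_nonneg _) (hWpos a (hSK _ ha) 0).le) (hB ⟨0, hd⟩ 0 a (hSK _ ha))
  obtain ⟨ρ, hρ0, hρ1, hρη, hρ2⟩ : ∃ ρ : ℝ, 0 < ρ ∧ ρ ≤ 1 ∧ ρ ≤ η ∧ 3 * Y * M' * ρ ≤ ε / 2 := by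
    refine ⟨min (min 1 η) (ε / 2 / (3 * Y * M' + 1)), by positivity, (min_le_left _ _).trans (min_le_left _ _),
      (min_le_left _ _).trans (min_le_right _ _), ?_⟩
    have h0 : 0 ≤ 3 * Y * M' := by positivity
    calc _ ≤ 3 * Y * M' * (ε / 2 / (3 * Y * M' + 1)) := by gcongr; exact min_le_right _ _
      _ ≤ (3 * Y * M' + 1) * (ε / 2 / (3 * Y * M' + 1)) := by gcongr; linarith
      _ = ε / 2 := by field_simp
  obtain ⟨θ, hθ0, hθ1, hθ2⟩ : ∃ θ : ℝ, 0 < θ ∧ θ ≤ 1/2 ∧ Y * (4 * θ) ≤ ε / 2 := by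
    refine ⟨min (1/2) (ε / (8 * (Y + 1))), by positivity, min_le_left _ _, ?_⟩
    calc _ ≤ Y * (4 * (ε / (8 * (Y + 1)))) := by gcongr; exact min_le_right _ _
      _ ≤ (Y + 1) * (4 * (ε / (8 * (Y + 1)))) := by gcongr; linarith
      _ = ε / 2 := by field_simp; norm_num
  obtain ⟨δ, hδ0, hδ⟩ := HU θ hθ0
  obtain ⟨Q, n, hQ, hnQ, hn0, q1, q2, q3, q4⟩ := choose_Q d hd (max (max 2 N) (L+1)) D1 γ (B / D2)
    ((1 + M') * B / D2) (ρ^m) ε θ δ hγ (by positivity) hε hθ0 hδ0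
  have hn2 : 2 ≤ n := le_trans (by simp) hn0
  have hnN : N ≤ n := le_trans (by simp) hn0
  have hnL : L < n := le_trans (by simp) hn0
  obtain ⟨r, hr, hrc⟩ := cover_pi d S hne α hS Q hQ
  choose root hroot using fun z : ℂ => IsAlgClosed.exists_pow_nat_eq z (show 0 < m by omega)
  have hrK : ∀ j i, r j i ∈ K := fun j i => hSK i (hr j i)
  set x : Fin d → ℕ → ℂ := fun i p => if p < n then u i p else if p / n ≤ n then
    root (y i (p % n) * ((W (r (p/n - 1) i) (p % n) / W (r (p/n - 1) i) p : ℝ) : ℂ)) else 0 with hx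
  have hlogp : ∀ p, n ≤ p → p / n ≤ n → Real.log p ≤ 3 * Real.log n := by
    intro p hp hpn
    have h1 : p ≤ n^3 := by
      have : p < (n+1) * n := by
        have := Nat.lt_mul_div_succ p (show 0 < n by omega)
        nlinarith
      nlinarith
    have h2 : Real.log p ≤ Real.log ((n^3 : ℕ) : ℝ) :=
      Real.log_le_log (by exact_mod_cast (by omega : 0 < p)) (by exact_mod_cast h1)
    rw [Nat.cast_pow, Real.log_pow] at h2
    exact_mod_cast h2
  have hlogn : 0 ≤ Real.log n := Real.log_natCast_nonneg n
  have hxb : ∀ i p, n ≤ p → p / n ≤ n → (x i p)^m =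
      y i (p % n) * ((W (r (p/n - 1) i) (p % n) / W (r (p/n - 1) i) p : ℝ) : ℂ) := by
    intro i p h1 h2
    simp only [hx, if_neg (not_lt.2 h1), if_pos h2]
    exact hroot _
  have hxρ : ∀ i p, n ≤ p → ‖x i p‖ ≤ ρ := by
    intro i p h1
    by_cases h2 : p / n ≤ n
    · refine le_of_pow_le_pow_left₀ (show m ≠ 0 by omega) hρ0.le ?_
      rw [← norm_pow, hxb i p h1 h2, norm_mul, Complex.norm_real,
        Real.norm_of_nonneg (div_nonneg (hWpos _ (hrK _ _) _).le (hWpos _ (hrK _ _) _).le), ← mul_div_assoc]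
      refine le_trans ?_ q1
      have hWp := H2 p (hnN.trans h1) _ (hrK (p/n - 1) i)
      have hnpos : (0:ℝ) < n := by exact_mod_cast (by omega : 0 < n)
      have hnp : (n:ℝ)^γ ≤ (p:ℝ)^γ := Real.rpow_le_rpow hnpos.le (by exact_mod_cast h1) hγ.le
      have hng : 0 < (n:ℝ)^γ := Real.rpow_pos_of_pos hnpos _
      calc _ ≤ B / (D2 * (n:ℝ)^γ) := by
            apply div_le_div₀ hB0 (hB _ _ _ (hrK _ _)) (by positivity)
            exact le_trans (by gcongr) hWp
        _ = _ := by rw [Real.rpow_neg hnpos.le]; field_simp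
    · simp only [hx, if_neg (not_lt.2 h1), if_neg h2, norm_zero]; exact hρ0.le
  refine ⟨x, n * (n+1), ?_, ?_, ?_⟩
  · intro i l hl
    have h1 : ¬ l < n := by nlinarith
    have h2 : ¬ l / n ≤ n := by
      rw [not_le, Nat.lt_iff_add_one_le, Nat.le_div_iff_mul_le (by omega)]; nlinarith
    simp only [hx, if_neg h1, if_neg h2]
  · intro i l
    by_cases h : l < n
    · simp only [hx, if_pos h, sub_self, norm_zero]; exact hη.le
    · rw [hu i l (by omega), sub_zero]
      exact (hxρ i l (by omega)).trans hρη
  · intro lam hlam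
    obtain ⟨k, hk, hkc⟩ := hrc lam hlam
    rw [← hnQ] at hk
    refine ⟨n * (k+1), by nlinarith, by nlinarith, ?_⟩
    intro g g0 hg i s
    have hlamK : lam i ∈ K := hSK i (hlam i)
    set p := s + n * (k+1) with hp
    have hpn : n ≤ p := by nlinarith
    have hdiv : p / n = s / n + (k + 1) := by rw [hp, Nat.add_mul_div_left _ _ (by omega)]
    have hmod : p % n = s % n := by rw [hp, Nat.add_mul_mod_self_left]
    by_cases h2 : p / n ≤ n
    · by_cases hs : s < n
      · have e1 : s / n = 0 := Nat.div_eq_of_lt hs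
        have e2 : p / n - 1 = k := by omega
        have e3 : p % n = s := by rw [hmod, Nat.mod_eq_of_lt hs]
        have hc := hxb i p hpn h2
        rw [e2, e3] at hc
        by_cases hsL : s < L
        · have hpw := H1 p (hnN.trans hpn) _ hlamK _ (hrK k i)
          have hab := hkc i
          have hl1 : |Real.log (W (lam i) p) - Real.log (W (r k i) p)| ≤ θ := by
            refine hpw.trans (le_trans ?_ q3)
            have := hlogp p hpn h2
            gcongr
          have := near_est g m M' hM' hg (x i p) (y i s) ρ θ Y hρ1 (hxρ i p hpn) hθ1 (hY i s)
            (W (lam i) p) (W (r k i) p) (W (r k i) s) (W (lam i) s) (hWpos _ hlamK _) (hWpos _ (hrK _ _) _)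
            (hWpos _ (hrK _ _) _) (hWpos _ hlamK _) hc hl1
            (hδ s hsL _ hlamK _ (hrK _ _) (lt_of_le_of_lt hab q4))
          linarith
        · rw [hy i s (by omega)] at hc ⊢
          rw [zero_mul] at hc
          rw [eq_zero_of_pow_eq_zero hc, g0]
          simpa using hε.le
      · rw [hy i s (by omega), sub_zero]
        refine le_trans ?_ q2
        have hpw := H1 p (hnN.trans hpn) _ hlamK _ (hrK (p/n-1) i)
        have hd4 := hSd i _ (hlam i) _ (hr (p/n-1) i)
        refine far_est g m M' hM' hg (x i p) (y i (p % n)) ((hxρ i p hpn).trans hρ1) _ _ _ _ D2 γ n B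
          (hWpos _ hlamK _) (hWpos _ (hrK (p/n-1) i) p) (hWpos _ (hrK (p/n-1) i) (p%n)) hD2
          (by exact_mod_cast (by omega : 1 ≤ n)) (hxb i p hpn h2) (hB _ _ _ (hrK _ _)) ?_ ?_
        · refine hpw.trans ?_
          have h3 := hlogp p hpn h2
          calc _ ≤ D1 * (3 * Real.log n) * |lam i - r (p/n-1) i| := by gcongr
            _ = (D1 * |lam i - r (p/n-1) i|) * (3 * Real.log n) := by ring
            _ ≤ γ / 4 * (3 * Real.log n) := by gcongr
            _ = _ := by ring
        · refine le_trans ?_ (H2 s (by omega) _ hlamK)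
          have : (n:ℝ) ≤ s := by exact_mod_cast (by omega : n ≤ s)
          gcongr
    · have hsn : ¬ s < n := by
        intro hs
        have e1 : s / n = 0 := Nat.div_eq_of_lt hs
        omega
      have : x i p = 0 := by simp only [hx, if_neg (not_lt.2 hpn), if_neg h2]
      rw [this, g0, hy i s (by omega)]
      simpa using hε.le

/-- Polynomials with lowest term `t^m` and degree and coefficients bounded by `M`. -/
def PolyFam (m M : ℕ) : Set (Polynomial ℂ) :=
  {g | g.natDegree ≤ M ∧ (∀ r, ‖g.coeff r‖ ≤ M) ∧ (∀ r < m, g.coeff r = 0) ∧ g.coeff m = 1}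

lemma PolyFam.low {m M : ℕ} {g : Polynomial ℂ} (hg : g ∈ PolyFam m M) (t : ℂ) (ht : ‖t‖ ≤ 1) :
    ‖g.eval t - t^m‖ ≤ ((M+1:ℕ) * M : ℝ) * ‖t‖^(m+1) := by
  obtain ⟨h1, h2, h3, h4⟩ := hg
  have hmM : m ≤ M := by
    refine le_trans (Polynomial.le_natDegree_of_ne_zero ?_) h1
    rw [h4]; exact one_ne_zero
  have e : g.eval t - t^m = ∑ r ∈ range (M+1), (g.coeff r * t^r - if r = m then t^m else 0) := by
    rw [Finset.sum_sub_distrib, Polynomial.eval_eq_sum_range' (Nat.lt_succ_of_le h1),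
      Finset.sum_ite_eq' (range (M+1)) m, if_pos (by simp; omega)]
  rw [e]
  refine (norm_sum_le _ _).trans ?_
  calc _ ≤ ∑ r ∈ range (M+1), (M:ℝ) * ‖t‖^(m+1) := by
        refine Finset.sum_le_sum fun r _ => ?_
        rcases lt_trichotomy r m with h | h | h
        · rw [h3 r h, if_neg h.ne]; simp; positivity
        · subst h; simp [h4]; positivity
        · rw [if_neg h.ne', sub_zero, norm_mul, norm_pow]
          exact mul_le_mul (h2 r) (pow_le_pow_of_le_one (norm_nonneg _) ht (by omega)) (by positivity)
            (by positivity)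
    _ = _ := by simp; ring

lemma pow_lip (R : ℝ) (hR : 0 ≤ R) (r : ℕ) : ∃ C ≥ 0, ∀ s t : ℂ, ‖s‖ ≤ R → ‖t‖ ≤ R →
    ‖s^r - t^r‖ ≤ C * ‖s - t‖ := by
  induction r with
  | zero => exact ⟨0, le_rfl, by simp⟩
  | succ r ih =>
    obtain ⟨C, hC, h⟩ := ih
    refine ⟨R * C + R^r, by positivity, fun s t hs ht => ?_⟩
    have e : s^(r+1) - t^(r+1) = s * (s^r - t^r) + (s - t) * t^r := by ring
    rw [e]
    refine (norm_add_le _ _).trans ?_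
    rw [norm_mul, norm_mul, norm_pow]
    have h1 := h s t hs ht
    calc _ ≤ R * (C * ‖s-t‖) + ‖s - t‖ * R^r := by gcongr
      _ = _ := by ring

lemma PolyFam.lip (m M : ℕ) (R : ℝ) (hR : 0 ≤ R) : ∃ C ≥ 0, ∀ g ∈ PolyFam m M, ∀ s t : ℂ, ‖s‖ ≤ R → ‖t‖ ≤ R →
    ‖g.eval s - g.eval t‖ ≤ C * ‖s - t‖ := by
  choose C hC h using pow_lip R hR
  refine ⟨∑ r ∈ range (M+1), M * C r, Finset.sum_nonneg fun r _ => mul_nonneg (by positivity) (hC r), ?_⟩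
  rintro g ⟨h1, h2, h3, h4⟩ s t hs ht
  rw [Polynomial.eval_eq_sum_range' (Nat.lt_succ_of_le h1), Polynomial.eval_eq_sum_range' (Nat.lt_succ_of_le h1),
    ← Finset.sum_sub_distrib, Finset.sum_mul]
  refine (norm_sum_le _ _).trans (Finset.sum_le_sum fun r _ => ?_)
  rw [← mul_sub, norm_mul, mul_assoc]
  exact mul_le_mul (h2 r) (h r s t hs ht) (norm_nonneg _) (by positivity)

lemma exists_polyFam (R : Polynomial ℂ) (hR : R ≠ 0) (h0 : R.coeff 0 = 0) :
    ∃ (a : ℂ) (m M : ℕ) (g : Polynomial ℂ), a ≠ 0 ∧ 1 ≤ m ∧ g ∈ PolyFam m M ∧ R = Polynomial.C a * g := by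
  have ha : R.trailingCoeff ≠ 0 := by simpa using hR
  have hm : 1 ≤ R.natTrailingDegree := by
    rw [Nat.one_le_iff_ne_zero]
    intro h
    apply ha
    rw [Polynomial.trailingCoeff, h, h0]
  set g := Polynomial.C (R.trailingCoeff)⁻¹ * R with hg
  obtain ⟨M, hM⟩ := exists_nat_ge (∑ r ∈ range (g.natDegree + 1), ‖g.coeff r‖)
  refine ⟨R.trailingCoeff, R.natTrailingDegree, max g.natDegree M, g, ha, hm, ⟨le_max_left _ _, ?_, ?_, ?_⟩, ?_⟩
  · intro r
    by_cases hr : r ≤ g.natDegree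
    · have h1 : ‖g.coeff r‖ ≤ ∑ r ∈ range (g.natDegree + 1), ‖g.coeff r‖ :=
        Finset.single_le_sum (f := fun r => ‖g.coeff r‖) (fun _ _ => norm_nonneg _) (by simp; omega)
      have h2 : (M:ℝ) ≤ (max g.natDegree M : ℕ) := by exact_mod_cast le_max_right _ _
      linarith
    · rw [Polynomial.coeff_eq_zero_of_natDegree_lt (by omega)]; simp
  · intro r hr
    rw [hg, Polynomial.coeff_C_mul, Polynomial.coeff_eq_zero_of_lt_natTrailingDegree hr, mul_zero]
  · rw [hg, Polynomial.coeff_C_mul]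
    exact inv_mul_cancel₀ ha
  · rw [hg, ← mul_assoc, ← Polynomial.C_mul, mul_inv_cancel₀ ha, Polynomial.C_1, one_mul]

/-- build an element of c₀ -/
def mkC0 (f : ℕ → ℂ) (hf : Filter.Tendsto f Filter.atTop (nhds 0)) : c0C where
  toFun := f
  continuous_toFun := continuous_of_discreteTopology
  zero_at_infty' := by
    rw [Filter.cocompact_eq_cofinite, Nat.cofinite_eq_atTop]; exact hf

@[simp] lemma mkC0_apply (f : ℕ → ℂ) (hf) (n : ℕ) : mkC0 f hf n = f n := rfl

lemma c0_tendsto (f : c0C) : Filter.Tendsto f Filter.atTop (nhds 0) := by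
  have := f.zero_at_infty'
  rw [Filter.cocompact_eq_cofinite, Nat.cofinite_eq_atTop] at this
  exact this

lemma c0_norm_le (f : c0C) (n : ℕ) : ‖f n‖ ≤ ‖f‖ := by
  rw [← ZeroAtInftyContinuousMap.norm_toBCF_eq_norm]
  exact f.toBCF.norm_coe_le_norm n

lemma c0_le_norm (f : c0C) (C : ℝ) (hC : 0 ≤ C) (h : ∀ n, ‖f n‖ ≤ C) : ‖f‖ ≤ C := by
  rw [← ZeroAtInftyContinuousMap.norm_toBCF_eq_norm]
  exact (BoundedContinuousFunction.norm_le hC).2 h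

lemma pi_norm_le {d : ℕ} (v : Fin d → c0C) (C : ℝ) (hC : 0 ≤ C) (h : ∀ i n, ‖v i n‖ ≤ C) : ‖v‖ ≤ C :=
  (pi_norm_le_iff_of_nonneg hC).2 fun i => c0_le_norm _ _ hC (h i)

lemma pi_le_norm {d : ℕ} (v : Fin d → c0C) (i : Fin d) (n : ℕ) : ‖v i n‖ ≤ ‖v‖ :=
  (c0_norm_le _ _).trans (norm_le_pi_norm v i)

lemma fin_tendsto (f : ℕ → ℂ) (L : ℕ) (h : ∀ l, L ≤ l → f l = 0) : Filter.Tendsto f Filter.atTop (nhds 0) :=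
  tendsto_const_nhds.congr' (by filter_upwards [Filter.eventually_ge_atTop L] with l hl; exact (h l hl).symm)

/-- countable family of finitely supported targets -/
def target (d : ℕ) (q : Σ L : ℕ, (Fin d → Fin L → ℕ)) (i : Fin d) (n : ℕ) : ℂ :=
  if h : n < q.1 then TopologicalSpace.denseSeq ℂ (q.2 i ⟨n, h⟩) else 0

lemma target_zero (d : ℕ) (q : Σ L : ℕ, (Fin d → Fin L → ℕ)) (i : Fin d) (n : ℕ) (h : q.1 ≤ n) :
    target d q i n = 0 := by
  simp [target, not_lt.2 h]

lemma target_dense (d : ℕ) (v : Fin d → c0C) (ε : ℝ) (hε : 0 < ε) :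
    ∃ q, ∀ i n, ‖target d q i n - v i n‖ ≤ ε := by
  have h1 : ∀ i, ∃ L, ∀ n, L ≤ n → ‖v i n‖ ≤ ε := by
    intro i
    have := (c0_tendsto (v i)).norm
    rw [norm_zero] at this
    exact Filter.eventually_atTop.1 (this.eventually_le_const hε)
  choose L hL using h1
  have h2 : ∀ z : ℂ, ∃ k, ‖TopologicalSpace.denseSeq ℂ k - z‖ ≤ ε := by
    intro z
    obtain ⟨k, hk⟩ := (TopologicalSpace.denseRange_denseSeq ℂ).exists_dist_lt z hε
    refine ⟨k, ?_⟩
    rw [dist_comm, dist_eq_norm] at hk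
    exact hk.le
  choose κ hκ using h2
  refine ⟨⟨univ.sup L, fun i n => κ (v i n)⟩, fun i n => ?_⟩
  by_cases h : n < univ.sup L
  · simp only [target, dif_pos h]; exact hκ _
  · simp only [target, dif_neg h, zero_sub, norm_neg]
    exact hL i n (le_trans (Finset.le_sup (mem_univ i)) (not_lt.1 h))

/-- partial products -/
def Wp (w : ℝ → ℕ → ℝ) (a : ℝ) (n : ℕ) : ℝ := ∏ i ∈ Icc 1 n, w a i

lemma Wp_succ (w : ℝ → ℕ → ℝ) (a : ℝ) (n : ℕ) : Wp w a (n+1) = Wp w a n * w a (n+1) := by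
  unfold Wp; rw [Finset.prod_Icc_succ_top (by omega)]

lemma Wp_pos (w : ℝ → ℕ → ℝ) (a : ℝ) (h : ∀ n, 1 ≤ n → 0 < w a n) (n : ℕ) : 0 < Wp w a n :=
  Finset.prod_pos fun i hi => h i (Finset.mem_Icc.1 hi).1

lemma Wp_ratio_le (w : ℝ → ℕ → ℝ) (a C : ℝ) (hC : 1 ≤ C) (h : ∀ n, 1 ≤ n → 0 < w a n)
    (h2 : ∀ n, 1 ≤ n → w a n ≤ C) (s n : ℕ) : Wp w a (s+n) / Wp w a s ≤ C^n := by
  rw [div_le_iff₀ (Wp_pos w a h s)]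
  induction n with
  | zero => simp
  | succ n ih =>
    rw [← add_assoc, Wp_succ, pow_succ]
    have := h2 (s+n+1) (by omega)
    have h3 := h (s+n+1) (by omega)
    have h4 := Wp_pos w a h s
    calc _ ≤ C^n * Wp w a s * C := by gcongr
      _ = _ := by ring

/-- vectors good for one target -/
def Gset (d : ℕ) (w : ℝ → ℕ → ℝ) (S : Fin d → Set ℝ) (y : Fin d → ℕ → ℂ) (m M : ℕ) (ε : ℝ) :
    Set (Fin d → c0C) :=
  {x | ∀ lam : Fin d → ℝ, (∀ i, lam i ∈ S i) → ∀ g ∈ PolyFam m M, ∃ n, 1 ≤ n ∧ ∀ i s,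
    ‖((Wp w (lam i) (s+n) / Wp w (lam i) s : ℝ) : ℂ) * g.eval (x i (s+n)) - y i s‖ ≤ ε}

lemma unif_aux (K : Set ℝ) (hK : IsCompact K) (w : ℝ → ℕ → ℝ) (hpos : ∀ a ∈ K, ∀ n, 1 ≤ n → 0 < w a n)
    (hcont : ∀ n, ContinuousOn (fun a => w a n) K) (L : ℕ) (θ : ℝ) (hθ : 0 < θ) :
    ∃ δ > 0, ∀ l < L, ∀ a ∈ K, ∀ b ∈ K, |a - b| < δ →
      |Real.log (Wp w a l) - Real.log (Wp w b l)| ≤ θ := by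
  have hc : ContinuousOn (fun a => (fun l : Fin L => Real.log (Wp w a l))) K := by
    refine continuousOn_pi.2 fun l => ContinuousOn.log ?_ ?_
    · unfold Wp
      exact continuousOn_finsetProd _ fun i _ => hcont i
    · intro a ha
      exact (Wp_pos w a (hpos a ha) l).ne'
  obtain ⟨δ, hδ, h⟩ := Metric.uniformContinuousOn_iff.1 (hK.uniformContinuousOn_of_continuous hc) θ hθ
  refine ⟨δ, hδ, fun l hl a ha b hb hab => ?_⟩
  have := h a ha b hb hab
  exact ((dist_le_pi_dist _ _ (⟨l, hl⟩ : Fin L)).trans_lt this).le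

lemma dense_G (d : ℕ) (hd : 1 ≤ d) (K : Set ℝ) (hK : IsCompact K) (w : ℝ → ℕ → ℝ)
    (hpos : ∀ a ∈ K, ∀ n, 1 ≤ n → 0 < w a n) (hcont : ∀ n, ContinuousOn (fun a => w a n) K)
    (C : ℝ) (hC : 1 ≤ C) (hwC : ∀ a ∈ K, ∀ n, 1 ≤ n → w a n ≤ C)
    (D1 D2 γ : ℝ) (hD1 : 0 < D1) (hD2 : 0 < D2) (hγ : 0 < γ) (N : ℕ)
    (H1 : ∀ p, N ≤ p → ∀ a ∈ K, ∀ b ∈ K,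
      |Real.log (Wp w a p) - Real.log (Wp w b p)| ≤ D1 * Real.log p * |a - b|)
    (H2 : ∀ p, N ≤ p → ∀ a ∈ K, D2 * (p:ℝ)^γ ≤ Wp w a p)
    (S : Fin d → Set ℝ) (hSK : ∀ i, S i ⊆ K) (α : Fin d → ℝ)
    (hS : ∀ i, S i ⊆ Set.Icc (α i) (α i + 1))
    (hSd : ∀ i, ∀ a ∈ S i, ∀ b ∈ S i, D1 * |a - b| ≤ γ / 4)
    (q : Σ L : ℕ, (Fin d → Fin L → ℕ)) (m : ℕ) (hm : 1 ≤ m) (M : ℕ) (ε : ℝ) (hε : 0 < ε) :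
    Dense (interior (Gset d w S (target d q) m M ε)) := by
  by_cases hne : ∀ i, (S i).Nonempty
  swap
  · have : Gset d w S (target d q) m M ε = Set.univ := by
      rw [Set.eq_univ_iff_forall]
      intro x lam hlam
      exact (hne fun i => ⟨_, hlam i⟩).elim
    rw [this, interior_univ]
    exact dense_univ
  rw [Metric.dense_iff]
  intro x0 η hη
  obtain ⟨qu, hqu⟩ := target_dense d x0 (η/4) (by positivity)
  set y := target d q with hy
  set u := target d qu with hu
  set L := max q.1 qu.1 with hL
  have hyL : ∀ i l, L ≤ l → y i l = 0 := fun i l h => target_zero d q i l ((le_max_left _ _).trans h)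
  have huL : ∀ i l, L ≤ l → u i l = 0 := fun i l h => target_zero d qu i l ((le_max_right _ _).trans h)
  have hWpos : ∀ a ∈ K, ∀ n, 0 < Wp w a n := fun a ha n => Wp_pos w a (hpos a ha) n
  have hWC : ∀ a ∈ K, ∀ s n, Wp w a (s+n) / Wp w a s ≤ C^n :=
    fun a ha s n => Wp_ratio_le w a C hC (hpos a ha) (hwC a ha) s n
  have hY : ∀ i l, ‖y i l‖ ≤ ∑ i, ∑ l ∈ range L, ‖y i l‖ := by
    intro i l
    by_cases h : l < L
    · calc ‖y i l‖ ≤ ∑ l ∈ range L, ‖y i l‖ :=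
            Finset.single_le_sum (f := fun l => ‖y i l‖) (fun _ _ => norm_nonneg _) (mem_range.2 h)
        _ ≤ _ := Finset.single_le_sum (f := fun i => ∑ l ∈ range L, ‖y i l‖)
            (fun _ _ => Finset.sum_nonneg fun _ _ => norm_nonneg _) (mem_univ i)
    · rw [hyL i l (by omega), norm_zero]
      exact Finset.sum_nonneg fun _ _ => Finset.sum_nonneg fun _ _ => norm_nonneg _
  set Y := ∑ i, ∑ l ∈ range L, ‖y i l‖ with hYdef
  have hY0 : 0 ≤ Y := Finset.sum_nonneg fun _ _ => Finset.sum_nonneg fun _ _ => norm_nonneg _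
  have hC0 : 0 < C := by linarith
  have hB : ∀ i l, ∀ a ∈ K, ‖y i l‖ * Wp w a l ≤ Y * C^L := by
    intro i l a ha
    by_cases h : l < L
    · have h1 : Wp w a l ≤ C^l := by
        have := hWC a ha 0 l
        simpa [Wp] using this
      have h2 : C^l ≤ C^L := pow_le_pow_right₀ hC h.le
      exact mul_le_mul (hY i l) (h1.trans h2) (hWpos a ha l).le hY0
    · rw [hyL i l (by omega), norm_zero, zero_mul]; positivity
  obtain ⟨x, L', hxL, hxu, hx⟩ := core d hd K (Wp w) hWpos D1 D2 γ hD1 hD2 hγ N H1 H2 S hSK hne α hS hSd y u L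
    hyL huL (Y * C^L) Y hB hY (fun θ hθ => unif_aux K hK w hpos hcont L θ hθ) m hm ((M+1:ℕ) * M : ℝ)
    (by positivity) (ε/2) (η/4) (by positivity) (by positivity)
  set x1 : Fin d → c0C := fun i => mkC0 (x i) (fin_tendsto _ L' (hxL i)) with hx1
  have hx1a : ∀ i n, x1 i n = x i n := fun i n => rfl
  refine ⟨x1, ?_, ?_⟩
  · rw [Metric.mem_ball, dist_eq_norm]
    refine lt_of_le_of_lt (pi_norm_le _ (η/2) (by positivity) fun i n => ?_) (by linarith : η/2 < η)
    have e : (x1 - x0) i n = (x i n - u i n) + (u i n - x0 i n) := by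
      rw [Pi.sub_apply, ZeroAtInftyContinuousMap.sub_apply, hx1a]; ring
    rw [e]
    refine (norm_add_le _ _).trans ?_
    linarith [hxu i n, hqu i n]
  · obtain ⟨C', hC', hlip⟩ := PolyFam.lip m M (‖x1‖ + 1) (by positivity)
    rw [mem_interior_iff_mem_nhds, Metric.mem_nhds_iff]
    refine ⟨min 1 (ε / 2 / (C^L' * C' + 1)), by positivity, ?_⟩
    intro z hz lam hlam g hg
    rw [Metric.mem_ball, dist_eq_norm, lt_min_iff] at hz
    obtain ⟨n, hn1, hnL, hn⟩ := hx lam hlam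
    refine ⟨n, hn1, fun i s => ?_⟩
    have h1 := hn (fun t => g.eval t) (by
      rw [← Polynomial.coeff_zero_eq_eval_zero]; exact hg.2.2.1 0 (by omega)) (fun t ht => PolyFam.low hg t ht) i s
    have hK' := hSK i (hlam i)
    have hzx : ‖z i (s+n) - x i (s+n)‖ ≤ ‖z - x1‖ := pi_le_norm (z - x1) i (s+n)
    have hzn : ‖z‖ ≤ ‖x1‖ + 1 := by
      have := norm_add_le (z - x1) x1
      rw [sub_add_cancel] at this
      linarith [hz.1]
    have h2 := hlip g hg (z i (s+n)) (x i (s+n)) ((pi_le_norm z _ _).trans hzn)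
      ((pi_le_norm x1 i (s+n)).trans (by linarith))
    set ra := Wp w (lam i) (s+n) / Wp w (lam i) s with hra
    have hra0 : 0 ≤ ra := div_nonneg (hWpos _ hK' _).le (hWpos _ hK' _).le
    have hra1 : ra ≤ C^L' := (hWC _ hK' s n).trans (pow_le_pow_right₀ hC hnL)
    have e : (ra:ℂ) * g.eval (z i (s+n)) - y i s
        = ((ra:ℂ) * g.eval (x i (s+n)) - y i s) + (ra:ℂ) * (g.eval (z i (s+n)) - g.eval (x i (s+n))) := by ring
    rw [e]
    refine (norm_add_le _ _).trans ?_
    have h3 : ‖(ra:ℂ) * (g.eval (z i (s+n)) - g.eval (x i (s+n)))‖ ≤ ε/2 := by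
      rw [norm_mul, Complex.norm_real, Real.norm_of_nonneg hra0]
      calc _ ≤ C^L' * (C' * (ε / 2 / (C^L' * C' + 1))) := by
            refine mul_le_mul hra1 (h2.trans ?_) (norm_nonneg _) (by positivity)
            exact mul_le_mul_of_nonneg_left (hzx.trans hz.2.le) hC'
        _ = (C^L' * C') * (ε / 2 / (C^L' * C' + 1)) := by ring
        _ ≤ (C^L' * C' + 1) * (ε / 2 / (C^L' * C' + 1)) := by gcongr; linarith
        _ = ε / 2 := by field_simp
    linarith

lemma shift_pow (d : ℕ) (w : ℝ → ℕ → ℝ) (T : (Fin d → c0C) →L[ℂ] (Fin d → c0C)) (lam : Fin d → ℝ)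
    (hpos : ∀ i, ∀ n, 1 ≤ n → 0 < w (lam i) n)
    (hT : ∀ (v : Fin d → c0C) (i : Fin d) (n : ℕ), (T v) i n = (w (lam i) (n + 1) : ℂ) * v i (n + 1))
    (n : ℕ) (v : Fin d → c0C) (i : Fin d) (s : ℕ) :
    ((T^n) v) i s = ((Wp w (lam i) (s+n) / Wp w (lam i) s : ℝ) : ℂ) * v i (s+n) := by
  induction n generalizing s with
  | zero => simp [div_self (Wp_pos w _ (hpos i) s).ne']
  | succ n ih =>
    rw [pow_succ', mul_apply_eq_comp, hT, ih]
    have h1 := (Wp_pos w _ (hpos i) s).ne'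
    have h2 := (hpos i (s+1) (by omega)).ne'
    rw [show s + 1 + n = s + (n+1) by ring, Wp_succ w (lam i) s, ← mul_assoc, ← Complex.ofReal_mul]
    congr 2
    field_simp

/-- Corollary 1.2 of the paper (case `X = c₀(ℕ)`). -/
theorem stmt_3 (d : ℕ) (hd : 1 ≤ d)
    (I : Set ℝ) (hIpos : ∀ a ∈ I, 0 < a) (hIσ : IsSigmaCompact I)
    (w : ℝ → ℕ → ℝ)
    (hwpos : ∀ a ∈ I, ∀ n : ℕ, 1 ≤ n → 0 < w a n)
    (hwbdd : ∀ a ∈ I, ∃ C : ℝ, ∀ n : ℕ, 1 ≤ n → w a n ≤ C)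
    (hwcont : ∀ n : ℕ, ContinuousOn (fun a => w a n) I)
    (hcrit : ∀ I₀ ⊆ I, IsCompact I₀ →
      ∃ D₁ > (0 : ℝ), ∃ D₂ > (0 : ℝ), ∃ γ > (0 : ℝ), ∃ N : ℕ, ∀ n : ℕ, N ≤ n →
        (∀ a ∈ I₀, ∀ b ∈ I₀,
          |(∑ i ∈ Finset.Icc 1 n, Real.log (w a i)) -
              ∑ i ∈ Finset.Icc 1 n, Real.log (w b i)| ≤ D₁ * Real.log n * |a - b|) ∧
        (∀ a ∈ I₀, D₂ * (n : ℝ) ^ γ ≤ ∏ i ∈ Finset.Icc 1 n, w a i))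
    (T : (Fin d → ℝ) → ((Fin d → c0C) →L[ℂ] (Fin d → c0C)))
    (hT : ∀ lam : Fin d → ℝ, (∀ i, lam i ∈ I) → IsProductShiftC0 d w (T lam) lam) :
    CommonHypercyclicAlgebraCWC0 d {lam | ∀ i, lam i ∈ I} T := by
  obtain ⟨K0, hK0c, hK0⟩ := hIσ
  set K : ℕ → Set ℝ := fun p => {a ∈ Set.accumulate K0 p | ∀ n : ℕ, 1 ≤ n → w a n ≤ p + 1} with hKdef
  have haccI : ∀ p, Set.accumulate K0 p ⊆ I := by
    intro p a ha
    obtain ⟨q, _, hq⟩ := Set.mem_accumulate.1 ha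
    rw [← hK0]; exact Set.mem_iUnion.2 ⟨q, hq⟩
  have hKI : ∀ p, K p ⊆ I := fun p a ha => haccI p ha.1
  have hKc : ∀ p, IsCompact (K p) := by
    intro p
    have hc : IsCompact (Set.accumulate K0 p) := isCompact_accumulate hK0c p
    have e : K p = Set.accumulate K0 p ∩
        ⋂ n : ℕ, ⋂ _ : 1 ≤ n, (Set.accumulate K0 p ∩ (fun a => w a n) ⁻¹' Set.Iic ((p:ℝ)+1)) := by
      ext a
      simp only [hKdef, Set.mem_ofPred_eq, Set.mem_inter_iff, Set.mem_iInter, Set.mem_preimage, Set.mem_Iic]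
      constructor
      · rintro ⟨h1, h2⟩; exact ⟨h1, fun n hn => ⟨h1, h2 n hn⟩⟩
      · rintro ⟨h1, h2⟩; exact ⟨h1, fun n hn => (h2 n hn).2⟩
    rw [e]
    refine hc.inter_right (isClosed_iInter fun n => isClosed_iInter fun _ => ?_)
    exact ((hwcont n).mono (haccI p)).preimage_isClosed_of_isClosed hc.isClosed isClosed_Iic
  choose D1 hD1 D2 hD2 γ hγ N hcr using fun p => hcrit (K p) (hKI p) (hKc p)
  set δ : ℕ → ℝ := fun p => min 1 (γ p / (4 * D1 p)) with hδdef
  have hδ0 : ∀ p, 0 < δ p := fun p => by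
    have := hD1 p
    have := hγ p
    simp only [hδdef]; positivity
  set S : ℕ → ℤ → Set ℝ := fun p z => K p ∩ Set.Icc (z * δ p) (z * δ p + δ p) with hSdef
  have hdense : ∀ (t : ℕ × ℕ × ℕ × (Σ L : ℕ, (Fin d → Fin L → ℕ)) × ℕ × (Fin d → ℤ)),
      Dense (interior (Gset d w (fun i => S t.2.2.2.2.1 (t.2.2.2.2.2 i)) (target d t.2.2.2.1) (t.1 + 1) t.2.1
        (1 / ((t.2.2.1 : ℝ) + 1)))) := by
    rintro ⟨m, M, k, q, p, z⟩
    have hposK : ∀ a ∈ K p, ∀ n, 1 ≤ n → 0 < w a n := fun a ha => hwpos a (hKI p ha)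
    refine dense_G d hd (K p) (hKc p) w hposK
      (fun n => (hwcont n).mono (hKI p)) (p+1) (by simp) (fun a ha => ha.2) (D1 p) (D2 p) (γ p) (hD1 p) (hD2 p)
      (hγ p) (N p) ?_ ?_ _ (fun i => Set.inter_subset_left) (fun i => z i * δ p) ?_ ?_ q (m+1) (by omega) M _
      (by positivity)
    · intro n hn a ha b hb
      have hl : ∀ a ∈ K p, Real.log (Wp w a n) = ∑ i ∈ Finset.Icc 1 n, Real.log (w a i) := by
        intro a ha
        unfold Wp
        rw [Real.log_prod]
        intro i hi
        exact (hposK a ha i (Finset.mem_Icc.1 hi).1).ne'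
      rw [hl a ha, hl b hb]
      exact (hcr p n hn).1 a ha b hb
    · intro n hn a ha
      exact (hcr p n hn).2 a ha
    · intro i a ha
      have h1 : δ p ≤ 1 := min_le_left _ _
      exact ⟨ha.2.1, by linarith [ha.2.2]⟩
    · intro i a ha b hb
      have h1 : δ p ≤ γ p / (4 * D1 p) := min_le_right _ _
      have h2 : |a - b| ≤ δ p := by
        rw [abs_le]
        constructor <;> linarith [ha.2.1, ha.2.2, hb.2.1, hb.2.2]
      have := hD1 p
      calc D1 p * |a - b| ≤ D1 p * (γ p / (4 * D1 p)) := by gcongr; exact h2.trans h1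
        _ = γ p / 4 := by field_simp
  have hD := dense_iInter_of_isOpen (fun t => isOpen_interior) hdense
  have hopen : IsOpen ({0}ᶜ : Set (Fin d → c0C)) := isOpen_compl_singleton
  have hnonempty : ({0}ᶜ : Set (Fin d → c0C)).Nonempty := by
    refine ⟨fun _ => mkC0 (fun n => if n = 0 then 1 else 0) (fin_tendsto _ 1 ?_), ?_⟩
    · intro l hl; simp; omega
    · intro h
      have := congrArg (fun v : Fin d → c0C => v ⟨0, hd⟩ 0) h
      simp at this
  obtain ⟨x, hx0, hx⟩ := hD.inter_open_nonempty _ hopen hnonempty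
  replace hx0 : x ≠ 0 := hx0
  have hxG : ∀ (m M k : ℕ) (q) (p : ℕ) (z : Fin d → ℤ), x ∈ Gset d w (fun i => S p (z i)) (target d q) (m + 1) M (1 / ((k : ℝ) + 1)) := by
    intro m M k q p z
    exact interior_subset (Set.mem_iInter.1 hx ⟨m, M, k, q, p, z⟩)
  refine ⟨{v | ∃ P : Polynomial ℂ, ∀ i n, v i n = (Polynomial.X * P).eval (x i n)}, ?_, ?_, ?_, ?_, ?_, ?_⟩
  · exact ⟨0, by simp⟩
  · rintro v ⟨P, hP⟩ v' ⟨P', hP'⟩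
    refine ⟨P + P', fun i n => ?_⟩
    rw [Pi.add_apply, ZeroAtInftyContinuousMap.add_apply, hP, hP', mul_add, Polynomial.eval_add]
  · rintro c v ⟨P, hP⟩
    refine ⟨Polynomial.C c * P, fun i n => ?_⟩
    rw [Pi.smul_apply, ZeroAtInftyContinuousMap.smul_apply, hP]
    simp only [Polynomial.eval_mul, Polynomial.eval_X, Polynomial.eval_C, smul_eq_mul]
    ring
  · rintro v ⟨P, hP⟩ v' ⟨P', hP'⟩
    refine ⟨fun i => v i * v' i, ⟨P * (Polynomial.X * P'), fun i n => ?_⟩, fun i n => rfl⟩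
    rw [ZeroAtInftyContinuousMap.mul_apply, hP, hP', ← Polynomial.eval_mul]
    congr 1
    ring
  · exact ⟨x, ⟨1, by simp⟩, hx0⟩
  · rintro v ⟨P, hP⟩ hv0 lam hlam
    have hR : Polynomial.X * P ≠ 0 := by
      intro h
      apply hv0
      funext i
      ext n
      rw [hP, h]; simp
    obtain ⟨a, m, M, g, ha, hm, hg, hRg⟩ := exists_polyFam _ hR (by simp)
    obtain ⟨m, rfl⟩ : ∃ m', m = m' + 1 := ⟨m - 1, by omega⟩
    have hpK : ∃ p, ∀ i, lam i ∈ K p := by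
      have h1 : ∀ i, ∃ q, lam i ∈ K0 q := fun i => by
        have := hlam i
        rw [← hK0] at this
        exact Set.mem_iUnion.1 this
      choose q hq using h1
      choose C hC using fun i => hwbdd (lam i) (hlam i)
      choose c hc using fun i => exists_nat_ge (C i)
      refine ⟨max (univ.sup q) (univ.sup c), fun i => ⟨?_, fun n hn => ?_⟩⟩
      · exact Set.mem_accumulate.2 ⟨q i, (Finset.le_sup (mem_univ i)).trans (le_max_left _ _), hq i⟩
      · have h3 : c i ≤ max (univ.sup q) (univ.sup c) :=
          (Finset.le_sup (f := c) (mem_univ i)).trans (le_max_right _ _)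
        have h4 : (c i : ℝ) ≤ (max (univ.sup q) (univ.sup c) : ℕ) := by exact_mod_cast h3
        linarith [hC i n hn, hc i]
    obtain ⟨p, hp⟩ := hpK
    have hS : ∀ i, lam i ∈ S p ⌊lam i / δ p⌋ := by
      intro i
      have h0 := hδ0 p
      refine ⟨hp i, ?_, ?_⟩
      · have := Int.floor_le (lam i / δ p)
        rwa [le_div_iff₀ h0] at this
      · have := (Int.lt_floor_add_one (lam i / δ p)).le
        rw [div_le_iff₀ h0] at this
        linarith
    rw [Metric.dense_iff]
    intro v' ε hε
    have hna : 0 < ‖a‖ := norm_pos_iff.2 ha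
    obtain ⟨q, hq⟩ := target_dense d (a⁻¹ • v') (ε / (4 * ‖a‖)) (by positivity)
    obtain ⟨k, hk⟩ := exists_nat_one_div_lt (show 0 < ε / (4 * ‖a‖) by positivity)
    obtain ⟨n, hn1, hn⟩ := hxG m M k q p (fun i => ⌊lam i / δ p⌋) lam hS g hg
    obtain ⟨n, rfl⟩ : ∃ n', n = n' + 1 := ⟨n - 1, by omega⟩
    refine ⟨((T lam)^(n+1)) v, ?_, ⟨n, rfl⟩⟩
    rw [Metric.mem_ball, dist_eq_norm]
    refine lt_of_le_of_lt (pi_norm_le _ (ε/2) (by positivity) fun i s => ?_) (by linarith : ε/2 < ε)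
    rw [Pi.sub_apply, ZeroAtInftyContinuousMap.sub_apply,
      shift_pow d w (T lam) lam (fun i => hwpos _ (hlam i)) (hT lam hlam) (n+1) v i s, hP, hRg,
      Polynomial.eval_mul, Polynomial.eval_C]
    have h1 := hn i s
    have h2 := hq i s
    rw [Pi.smul_apply, ZeroAtInftyContinuousMap.smul_apply, smul_eq_mul] at h2
    set ra := Wp w (lam i) (s+(n+1)) / Wp w (lam i) s
    have e : (ra:ℂ) * (a * g.eval (x i (s+(n+1)))) - v' i s
        = a * (((ra:ℂ) * g.eval (x i (s+(n+1))) - target d q i s) + (target d q i s - a⁻¹ * v' i s)) := by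
      field_simp
      ring
    rw [e, norm_mul]
    calc _ ≤ ‖a‖ * (ε / (4 * ‖a‖) + ε / (4 * ‖a‖)) := by
          gcongr
          refine (norm_add_le _ _).trans (add_le_add (h1.trans hk.le) h2)
      _ = ε / 2 := by field_simp; ring
end
end
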